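/- For every ε > 0 there exists N_0 such that for every integer N ≥ N_0 there is a finite set M of positive integers with |M| = N and max M ≤ 2 · min M satisfying (1/N) ∑_{m ∈ M} ∑_{n ∈ M} √( gcd(m,n)/lcm(m,n) ) ≥ exp( (2√2 − ε) · √( (log N · log_3 N)/log_2 N ) ). -/

import Mathlib

open scoped Classical
open MeasureTheory Finset

/-- The zeta sum `∑_{1 ≤ n ≤ x} n^{it}`. -/
noncomputable def zetaSum (x t : ℝ) : ℂ :=
  ∑ n ∈ Finset.Icc 1 ⌊x⌋₊, (n : ℂ) ^ ((t : ℂ) * Complex.I)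

/-- `Ψ(x,y)`: the number of `y`-friable positive integers `n ≤ x`. -/
noncomputable def Psi (x y : ℝ) : ℕ :=
  ((Finset.Icc 1 ⌊x⌋₊).filter fun n => ∀ p : ℕ, p ∈ n.primeFactors → (p : ℝ) ≤ y).card

/-- `Ψ(x,y;t) = ∑_{n ≤ x, n y-friable} n^{it}`. -/
noncomputable def PsiT (x y t : ℝ) : ℂ :=
  ∑ n ∈ (Finset.Icc 1 ⌊x⌋₊).filter fun n => ∀ p : ℕ, p ∈ n.primeFactors → (p : ℝ) ≤ y,
    (n : ℂ) ^ ((t : ℂ) * Complex.I)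

/-! ### Mertens' first theorem -/

lemma Nat.log_factorial_eq_sum_primesLE (n : ℕ) :
    Real.log (n.factorial : ℝ) =
      ∑ p ∈ n.primesLE, (n.factorial.factorization p : ℝ) * Real.log p := by
  have hn := Nat.factorial_ne_zero n
  conv_lhs => rw [← Nat.prod_factorization_pow_eq_self hn]
  rw [Finsupp.prod_of_support_subset (s := n.primesLE) _ _ _ (by simp)]
  · push_cast
    rw [Real.log_prod]
    · simp [Real.log_pow]
    · intro p hp
      have := (Nat.mem_primesLE.1 hp).2.pos
      positivity
  · intro p hp
    rw [Nat.support_factorization] at hp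
    have h := Nat.mem_primeFactors.1 hp
    exact Nat.mem_primesLE.2 ⟨(h.1.dvd_factorial).1 h.2.1, h.1⟩

lemma Nat.le_factorization_factorial {n p : ℕ} (hp : p.Prime) (hpn : p ≤ n) :
    (n : ℝ) / p - 1 ≤ n.factorial.factorization p := by
  have h1 : n / p ≤ n.factorial.factorization p := by
    rw [Nat.factorization_factorial hp (b := Nat.log p n + 1) (Nat.lt_succ_self _)]
    refine le_trans (le_of_eq (by rw [pow_one])) (Finset.single_le_sum (f := fun i => n / p ^ i)
      (fun _ _ => Nat.zero_le _) (a := 1) ?_)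
    simp only [Finset.mem_Ico, le_refl, true_and]
    have := Nat.log_pos hp.one_lt hpn
    omega
  have h2 : (n : ℝ) / p - 1 ≤ (n / p : ℕ) := by
    have := Nat.lt_floor_add_one ((n : ℝ) / p)
    rw [Nat.floor_div_eq_div] at this
    linarith
  exact h2.trans (by exact_mod_cast h1)

lemma Nat.factorization_factorial_le_div {n p : ℕ} (hp : p.Prime) :
    (n.factorial.factorization p : ℝ) ≤ (n : ℝ) / ((p : ℝ) - 1) := by
  have := Fact.mk hp
  have h := sub_one_mul_padicValNat_factorial (p := p) n
  have h1 : (p - 1) * n.factorial.factorization p ≤ n := by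
    rw [Nat.factorization_def _ hp, h]
    exact Nat.sub_le _ _
  have h2 : (1 : ℝ) < p := by exact_mod_cast hp.one_lt
  rw [le_div_iff₀ (by linarith), mul_comm]
  have h3 : (((p - 1 : ℕ) : ℝ)) = p - 1 := by
    rw [Nat.cast_sub hp.one_le]; simp
  rw [← h3]
  exact_mod_cast h1

lemma sum_log_div_primesLE_le {n : ℕ} (hn : 1 ≤ n) :
    ∑ p ∈ n.primesLE, Real.log p / p ≤ Real.log n + Real.log 4 := by
  have hn0 : (0 : ℝ) < n := by exact_mod_cast hn
  have h1 : Real.log (n.factorial : ℝ) ≤ n * Real.log n := by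
    rw [← Real.log_pow]
    exact Real.log_le_log (by exact_mod_cast Nat.factorial_pos n)
      (by exact_mod_cast Nat.factorial_le_pow n)
  have h2 : ∑ p ∈ n.primesLE, ((n : ℝ) / p - 1) * Real.log p ≤ Real.log (n.factorial : ℝ) := by
    rw [Nat.log_factorial_eq_sum_primesLE]
    refine Finset.sum_le_sum fun p hp => ?_
    have hp := Nat.mem_primesLE.1 hp
    exact mul_le_mul_of_nonneg_right (Nat.le_factorization_factorial hp.2 hp.1)
      (Real.log_natCast_nonneg p)
  have h3 : ∑ p ∈ n.primesLE, Real.log p ≤ Real.log 4 * n := by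
    rw [← Chebyshev.theta_eq_sum_primesLE_log]
    exact Chebyshev.theta_le_log4_mul_x hn0.le
  have h4 : ∑ p ∈ n.primesLE, ((n : ℝ) / p - 1) * Real.log p
      = n * ∑ p ∈ n.primesLE, Real.log p / p - ∑ p ∈ n.primesLE, Real.log p := by
    rw [Finset.mul_sum, ← Finset.sum_sub_distrib]
    exact Finset.sum_congr rfl fun p _ => by ring
  have h5 : (n : ℝ) * ∑ p ∈ n.primesLE, Real.log p / p ≤ n * (Real.log n + Real.log 4) := by
    linarith
  exact le_of_mul_le_mul_left h5 hn0

lemma exists_le_sum_log_div_primesLE :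
    ∃ C : ℝ, ∀ n : ℕ, 1 ≤ n → Real.log n - C ≤ ∑ p ∈ n.primesLE, Real.log p / p := by
  have hs : Summable fun n : ℕ => 4 * (1 / (n : ℝ) ^ (3 / 2 : ℝ)) :=
    (Real.summable_one_div_nat_rpow.2 (by norm_num)).mul_left 4
  refine ⟨1 + ∑' n : ℕ, 4 * (1 / (n : ℝ) ^ (3 / 2 : ℝ)), fun n hn => ?_⟩
  have hn0 : (0 : ℝ) < n := by exact_mod_cast hn
  have h1 : n * Real.log n - n ≤ Real.log (n.factorial : ℝ) := by
    have := Stirling.le_log_factorial_stirling (n := n) (by omega)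
    have h : 0 ≤ Real.log (2 * Real.pi) := Real.log_nonneg (by linarith [Real.pi_gt_three])
    linarith [Real.log_natCast_nonneg n]
  have h2 : Real.log (n.factorial : ℝ) ≤
      ∑ p ∈ n.primesLE, (n : ℝ) / ((p : ℝ) - 1) * Real.log p := by
    rw [Nat.log_factorial_eq_sum_primesLE]
    refine Finset.sum_le_sum fun p hp => ?_
    have hp := Nat.mem_primesLE.1 hp
    exact mul_le_mul_of_nonneg_right (Nat.factorization_factorial_le_div hp.2)
      (Real.log_natCast_nonneg p)
  have h3 : ∀ p ∈ n.primesLE, (n : ℝ) / ((p : ℝ) - 1) * Real.log p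
      ≤ n * (Real.log p / p + 4 * (1 / (p : ℝ) ^ (3 / 2 : ℝ))) := by
    intro p hp
    have hp := (Nat.mem_primesLE.1 hp).2
    have hp2 : (2 : ℝ) ≤ p := by exact_mod_cast hp.two_le
    have hlog : Real.log p ≤ 2 * (p : ℝ) ^ (1 / 2 : ℝ) := by
      have := Real.log_le_rpow_div (x := p) (ε := 1 / 2) (by linarith) (by norm_num)
      linarith
    have hpow : (p : ℝ) ^ (3 / 2 : ℝ) * (p : ℝ) ^ (1 / 2 : ℝ) = p * p := by
      rw [← Real.rpow_add (by linarith), ← pow_two, ← Real.rpow_natCast]; norm_num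
    have hp32 : (0 : ℝ) < (p : ℝ) ^ (3 / 2 : ℝ) := by positivity
    have hkey : 1 / ((p : ℝ) - 1) * Real.log p - Real.log p / p
        ≤ 4 * (1 / (p : ℝ) ^ (3 / 2 : ℝ)) := by
      have e : 1 / ((p : ℝ) - 1) * Real.log p - Real.log p / p
          = Real.log p / (p * (p - 1)) := by
        have : (p : ℝ) - 1 ≠ 0 := by linarith
        field_simp
        ring
      rw [e, mul_one_div, div_le_div_iff₀ (by nlinarith) hp32]
      calc Real.log p * (p : ℝ) ^ (3 / 2 : ℝ)
          ≤ 2 * (p : ℝ) ^ (1 / 2 : ℝ) * (p : ℝ) ^ (3 / 2 : ℝ) := by gcongr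
        _ = 2 * (p * p) := by rw [← hpow]; ring
        _ ≤ _ := by nlinarith
    calc (n : ℝ) / ((p : ℝ) - 1) * Real.log p = n * (1 / ((p : ℝ) - 1) * Real.log p) := by ring
      _ ≤ _ := by gcongr; linarith
  have h4 := h2.trans (Finset.sum_le_sum h3)
  rw [← Finset.mul_sum, Finset.sum_add_distrib] at h4
  have h5 : ∑ p ∈ n.primesLE, 4 * (1 / (p : ℝ) ^ (3 / 2 : ℝ))
      ≤ ∑' n : ℕ, 4 * (1 / (n : ℝ) ^ (3 / 2 : ℝ)) :=
    hs.sum_le_tsum _ fun _ _ => by positivity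
  have h6 : (n : ℝ) * (Real.log n - 1) ≤ n * (∑ p ∈ n.primesLE, Real.log p / p
      + ∑ p ∈ n.primesLE, 4 * (1 / (p : ℝ) ^ (3 / 2 : ℝ))) := by linarith
  have h7 := le_of_mul_le_mul_left h6 hn0
  linarith

/-- Mertens' first theorem, as a lower bound on intervals. -/
lemma exists_sub_le_sum_log_div_prime :
    ∃ C : ℝ, 0 < C ∧ ∀ x y : ℝ, 1 ≤ x → x ≤ y →
      Real.log y - Real.log x - C ≤
        ∑ p ∈ (Finset.Ioc ⌊x⌋₊ ⌊y⌋₊).filter Nat.Prime, Real.log p / p := by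
  obtain ⟨C, hC⟩ := exists_le_sum_log_div_primesLE
  refine ⟨|C| + Real.log 2 + Real.log 4,
    by have := Real.log_pos (x := 2) (by norm_num)
       have := Real.log_pos (x := 4) (by norm_num)
       positivity, fun x y hx hxy => ?_⟩
  have hfx : 1 ≤ ⌊x⌋₊ := (Nat.one_le_floor_iff x).2 hx
  have hfxy : ⌊x⌋₊ ≤ ⌊y⌋₊ := Nat.floor_le_floor hxy
  have h1 := hC ⌊y⌋₊ (hfx.trans hfxy)
  have h2 := sum_log_div_primesLE_le hfx
  have h3 : Real.log ⌊x⌋₊ ≤ Real.log x :=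
    Real.log_le_log (by exact_mod_cast hfx) (Nat.floor_le (by linarith))
  have h4 : Real.log y - Real.log 2 ≤ Real.log ⌊y⌋₊ := by
    rw [← Real.log_div (by linarith) (by norm_num)]
    refine Real.log_le_log (by linarith) ?_
    have := Nat.lt_floor_add_one y
    have : (1 : ℝ) ≤ ⌊y⌋₊ := by exact_mod_cast hfx.trans hfxy
    linarith
  have h5 : ∑ p ∈ (⌊y⌋₊).primesLE, Real.log p / p = ∑ p ∈ (⌊x⌋₊).primesLE, Real.log p / p
      + ∑ p ∈ (Finset.Ioc ⌊x⌋₊ ⌊y⌋₊).filter Nat.Prime, Real.log p / p := by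
    rw [← Finset.sum_union]
    · refine Finset.sum_congr ?_ fun _ _ => rfl
      ext p
      simp only [Nat.mem_primesLE, Finset.mem_union, Finset.mem_filter, Finset.mem_Ioc]
      constructor
      · rintro ⟨a, b⟩
        rcases le_or_gt p ⌊x⌋₊ with h | h
        · exact Or.inl ⟨h, b⟩
        · exact Or.inr ⟨⟨h, a⟩, b⟩
      · rintro (⟨a, b⟩ | ⟨⟨_, a⟩, b⟩)
        · exact ⟨a.trans hfxy, b⟩
        · exact ⟨a, b⟩
    · rw [Finset.disjoint_left]
      intro p hp hp'
      simp only [Nat.mem_primesLE, Finset.mem_filter, Finset.mem_Ioc] at hp hp'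
      omega
  linarith [le_abs_self C]

/-! ### The GCD kernel -/

/-- The kernel `√(gcd(m,n)/lcm(m,n))`. -/
noncomputable def gcdKernel (m n : ℕ) : ℝ :=
  Real.sqrt ((Nat.gcd m n : ℝ) / (Nat.lcm m n : ℝ))

lemma gcdKernel_nonneg (m n : ℕ) : 0 ≤ gcdKernel m n := Real.sqrt_nonneg _

lemma gcdKernel_comm (m n : ℕ) : gcdKernel m n = gcdKernel n m := by
  rw [gcdKernel, gcdKernel, Nat.gcd_comm, Nat.lcm_comm]

lemma gcdKernel_eq_div {m n : ℕ} (hm : 0 < m) (hn : 0 < n) :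
    gcdKernel m n = (Nat.gcd m n : ℝ) / (Real.sqrt m * Real.sqrt n) := by
  have hg : (0 : ℝ) < Nat.gcd m n := by exact_mod_cast Nat.gcd_pos_of_pos_left n hm
  have hm' : (0 : ℝ) < m := by exact_mod_cast hm
  have hn' : (0 : ℝ) < n := by exact_mod_cast hn
  have h : (Nat.lcm m n : ℝ) = m * n / Nat.gcd m n := by
    rw [eq_div_iff hg.ne', mul_comm]
    exact_mod_cast Nat.gcd_mul_lcm m n
  rw [gcdKernel, h, ← Real.sqrt_mul hm'.le,
    show (Nat.gcd m n : ℝ) / (m * n / Nat.gcd m n) = (Nat.gcd m n : ℝ) ^ 2 / (m * n) by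
      field_simp,
    Real.sqrt_div (by positivity), Real.sqrt_sq hg.le]

lemma gcdKernel_mul_left {t : ℕ} (ht : 0 < t) (m n : ℕ) :
    gcdKernel (t * m) (t * n) = gcdKernel m n := by
  have ht' : (t : ℝ) ≠ 0 := by exact_mod_cast ht.ne'
  rw [gcdKernel, gcdKernel, Nat.gcd_mul_left, Nat.lcm_mul_left]
  push_cast
  rw [mul_div_mul_left _ _ ht']

lemma gcdKernel_mul_mul {x y X Y : ℕ} (hx : 0 < x) (hy : 0 < y) (hX : 0 < X) (hY : 0 < Y)
    (h1 : Nat.Coprime x Y) (h2 : Nat.Coprime X y) (h3 : Nat.Coprime y Y) :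
    gcdKernel (x * X) (y * Y) = gcdKernel x y * gcdKernel X Y := by
  rw [gcdKernel_eq_div (by positivity) (by positivity), gcdKernel_eq_div hx hy,
    gcdKernel_eq_div hX hY]
  have : Nat.gcd (x * X) (y * Y) = Nat.gcd x y * Nat.gcd X Y := by
    rw [h3.gcd_mul, h2.gcd_mul_right_cancel, h1.gcd_mul_left_cancel]
  rw [this]
  push_cast
  rw [Real.sqrt_mul (by positivity), Real.sqrt_mul (by positivity), div_mul_div_comm]
  congr 1
  ring

lemma gcdKernel_prod {ι : Type*} (s : Finset ι) (x y : ι → ℕ)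
    (hx : ∀ i, 0 < x i) (hy : ∀ i, 0 < y i)
    (hxy : ∀ i j, i ≠ j → Nat.Coprime (x i) (y j))
    (hyy : ∀ i j, i ≠ j → Nat.Coprime (y i) (y j)) :
    gcdKernel (∏ i ∈ s, x i) (∏ i ∈ s, y i) = ∏ i ∈ s, gcdKernel (x i) (y i) := by
  induction s using Finset.induction_on with
  | empty => simp [gcdKernel]
  | insert a s ha ih =>
    have hne : ∀ i ∈ s, i ≠ a := fun i hi h => ha (h ▸ hi)
    rw [Finset.prod_insert ha, Finset.prod_insert ha, Finset.prod_insert ha, gcdKernel_mul_mul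
      (hx a) (hy a) (Finset.prod_pos fun i _ => hx i) (Finset.prod_pos fun i _ => hy i), ih]
    · exact Nat.Coprime.prod_right fun i hi => hxy a i (hne i hi).symm
    · exact Nat.Coprime.prod_left fun i hi => hxy i a (hne i hi)
    · exact Nat.Coprime.prod_right fun i hi => hyy a i (hne i hi).symm

lemma gcd_eq_sum_totient {m n : ℕ} (hm : 0 < m) {D : Finset ℕ} (hD : m.divisors ⊆ D) :
    (Nat.gcd m n : ℝ) =
      ∑ d ∈ D, (Nat.totient d : ℝ) * ((if d ∣ m then 1 else 0) * (if d ∣ n then 1 else 0)) := by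
  have hg : Nat.gcd m n ≠ 0 := (Nat.gcd_pos_of_pos_left n hm).ne'
  conv_lhs => rw [← Nat.sum_totient (Nat.gcd m n)]
  push_cast
  have hsub : (Nat.gcd m n).divisors ⊆ D :=
    (Nat.divisors_subset_of_dvd hm.ne' (Nat.gcd_dvd_left m n)).trans hD
  rw [← Finset.sum_subset hsub]
  · refine Finset.sum_congr rfl fun d hd => ?_
    have := Nat.dvd_gcd_iff.1 (Nat.dvd_of_mem_divisors hd)
    simp [this.1, this.2]
  · intro d _ hd
    rw [Nat.mem_divisors, Nat.dvd_gcd_iff] at hd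
    by_cases h1 : d ∣ m <;> by_cases h2 : d ∣ n <;> simp_all

/-- The quadratic form of the GCD kernel on an indexed family of integers. -/
noncomputable def gcdForm {α : Type*} (m : α → ℕ) (c : α → ℝ) (T : Finset α) : ℝ :=
  ∑ a ∈ T, ∑ b ∈ T, c a * c b * gcdKernel (m a) (m b)

lemma gcdForm_eq_sum_sq {α : Type*} (m : α → ℕ) (c : α → ℝ) (T : Finset α)
    (hm : ∀ a, 0 < m a) {D : Finset ℕ} (hD : ∀ a ∈ T, (m a).divisors ⊆ D) :
    gcdForm m c T = ∑ d ∈ D, (Nat.totient d : ℝ) *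
      (∑ a ∈ T, (if d ∣ m a then 1 else 0) * (c a / Real.sqrt (m a))) ^ 2 := by
  have h : ∀ a ∈ T, ∀ b ∈ T, c a * c b * gcdKernel (m a) (m b) = ∑ d ∈ D, (Nat.totient d : ℝ) *
      (((if d ∣ m a then 1 else 0) * (c a / Real.sqrt (m a))) *
        ((if d ∣ m b then 1 else 0) * (c b / Real.sqrt (m b)))) := by
    intro a ha b hb
    rw [gcdKernel_eq_div (hm a) (hm b), gcd_eq_sum_totient (hm a) (hD a ha), Finset.sum_div,
      Finset.mul_sum]
    refine Finset.sum_congr rfl fun d _ => ?_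
    simp only [div_eq_mul_inv, mul_inv]
    ring
  rw [gcdForm, Finset.sum_congr rfl fun a ha => Finset.sum_congr rfl fun b hb => h a ha b hb]
  simp_rw [pow_two, Finset.sum_mul_sum, Finset.mul_sum]
  rw [Finset.sum_congr rfl fun a _ => Finset.sum_comm, Finset.sum_comm]

/-- Splitting the support of a positive semidefinite form into classes costs at most the number
of classes. -/
lemma gcdForm_le_card_mul_sum_fiber {α β : Type*} (m : α → ℕ) (c : α → ℝ) (T : Finset α)
    (hm : ∀ a, 0 < m a) (κ : α → β) {K : Finset β} (hK : ∀ a ∈ T, κ a ∈ K) :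
    gcdForm m c T ≤ (K.card : ℝ) * ∑ k ∈ K, gcdForm m c (T.filter fun a => κ a = k) := by
  set D := T.biUnion fun a => (m a).divisors with hDdef
  have hD : ∀ a ∈ T, (m a).divisors ⊆ D := fun a ha =>
    Finset.subset_biUnion_of_mem (fun a => (m a).divisors) ha
  rw [gcdForm_eq_sum_sq m c T hm hD]
  rw [Finset.sum_congr rfl fun k _ => gcdForm_eq_sum_sq m c (T.filter fun a => κ a = k) hm
    (D := D) fun a ha => hD a (Finset.mem_filter.1 ha).1]
  rw [Finset.sum_comm, Finset.mul_sum]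
  refine Finset.sum_le_sum fun d _ => ?_
  rw [← Finset.mul_sum, mul_left_comm]
  refine mul_le_mul_of_nonneg_left ?_ (Nat.cast_nonneg _)
  rw [← Finset.sum_fiberwise_of_maps_to hK]
  exact sq_sum_le_card_mul_sum_sq

/-- From a weighted form to the unweighted form on one class of the support. -/
lemma exists_fiber_le_gcdForm_one {α β : Type*} (m : α → ℕ) (c : α → ℝ) (T : Finset α)
    (hT : T.Nonempty) (hm : ∀ a, 0 < m a) (hc : ∀ a ∈ T, 0 < c a) (κ : α → β) {K : Finset β}
    (hK : ∀ a ∈ T, κ a ∈ K) (hκ : ∀ a ∈ T, ∀ b ∈ T, κ a = κ b → c a ≤ 2 * c b)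
    {Z : ℝ} (hZ : ∑ a ∈ T, c a ^ 2 ≤ Z) (hZ0 : 0 < Z) :
    ∃ A ⊆ T, A.Nonempty ∧ (∀ a ∈ A, ∀ b ∈ A, κ a = κ b) ∧
      gcdForm m c T * A.card ≤ 4 * K.card * Z * gcdForm m (fun _ => 1) A := by
  obtain ⟨a₀, ha₀⟩ := hT
  have hK0 : 0 < (K.card : ℝ) := by exact_mod_cast Finset.card_pos.2 ⟨_, hK a₀ ha₀⟩
  set V := gcdForm m c T with hV
  have hV0 : 0 ≤ V := Finset.sum_nonneg fun a ha => Finset.sum_nonneg fun b hb =>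
    mul_nonneg (mul_nonneg (hc a ha).le (hc b hb).le) (gcdKernel_nonneg _ _)
  set K' := T.image κ with hK'
  have hK'K : (K'.card : ℝ) ≤ K.card := by
    exact_mod_cast Finset.card_le_card (Finset.image_subset_iff.2 hK)
  have hmaps : ∀ a ∈ T, κ a ∈ K' := fun a ha => Finset.mem_image_of_mem κ ha
  have h1 := gcdForm_le_card_mul_sum_fiber m c T hm κ hmaps
  have hK'0 : 0 < (K'.card : ℝ) := by exact_mod_cast Finset.card_pos.2 ⟨_, hmaps a₀ ha₀⟩
  have hsum : ∑ k ∈ K', V / (K.card * Z) * ∑ a ∈ T.filter (fun a => κ a = k), c a ^ 2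
      ≤ ∑ k ∈ K', gcdForm m c (T.filter fun a => κ a = k) := by
    rw [← Finset.mul_sum, Finset.sum_fiberwise_of_maps_to hmaps]
    calc V / (K.card * Z) * ∑ a ∈ T, c a ^ 2 ≤ V / (K.card * Z) * Z := by gcongr
      _ = V / K.card := by field_simp
      _ ≤ V / K'.card := by gcongr
      _ ≤ _ := by rw [div_le_iff₀ hK'0, mul_comm]; exact h1
  obtain ⟨k, hk, hle⟩ := Finset.exists_le_of_sum_le ⟨_, hmaps a₀ ha₀⟩ hsum
  set A := T.filter fun a => κ a = k with hA
  have hAT : A ⊆ T := Finset.filter_subset _ _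
  have hAκ : ∀ a ∈ A, κ a = k := fun a ha => (Finset.mem_filter.1 ha).2
  have hAne : A.Nonempty := by
    obtain ⟨a, ha, hak⟩ := Finset.mem_image.1 hk
    exact ⟨a, Finset.mem_filter.2 ⟨ha, hak⟩⟩
  refine ⟨A, hAT, hAne, fun a ha b hb => (hAκ a ha).trans (hAκ b hb).symm, ?_⟩
  obtain ⟨b₀, hb₀, hmin⟩ := Finset.exists_min_image A c hAne
  have hb0 := hc b₀ (hAT hb₀)
  have hup : gcdForm m c A ≤ 4 * c b₀ ^ 2 * gcdForm m (fun _ => 1) A := by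
    simp only [gcdForm, Finset.mul_sum]
    refine Finset.sum_le_sum fun a ha => Finset.sum_le_sum fun b hb => ?_
    have ha' := hκ a (hAT ha) b₀ (hAT hb₀) ((hAκ a ha).trans (hAκ b₀ hb₀).symm)
    have hb' := hκ b (hAT hb) b₀ (hAT hb₀) ((hAκ b hb).trans (hAκ b₀ hb₀).symm)
    have : c a * c b ≤ (2 * c b₀) * (2 * c b₀) :=
      mul_le_mul ha' hb' (hc b (hAT hb)).le (by positivity)
    calc c a * c b * gcdKernel (m a) (m b) ≤ (2 * c b₀) * (2 * c b₀) * gcdKernel (m a) (m b) :=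
          mul_le_mul_of_nonneg_right this (gcdKernel_nonneg _ _)
      _ = _ := by ring
  have hlow : A.card * c b₀ ^ 2 ≤ ∑ a ∈ A, c a ^ 2 := by
    rw [← nsmul_eq_mul]
    exact Finset.card_nsmul_le_sum _ _ _ fun a ha => pow_le_pow_left₀ hb0.le (hmin a ha) 2
  have h2 : V / (K.card * Z) * (A.card * c b₀ ^ 2) ≤ 4 * c b₀ ^ 2 * gcdForm m (fun _ => 1) A :=
    (mul_le_mul_of_nonneg_left hlow (by positivity)).trans (hle.trans hup)
  have h3 : c b₀ ^ 2 * (V * A.card) ≤ c b₀ ^ 2 * (4 * K.card * Z * gcdForm m (fun _ => 1) A) := by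
    have e : V / (K.card * Z) * (A.card * c b₀ ^ 2) = V * A.card * c b₀ ^ 2 / (K.card * Z) := by
      field_simp
    rw [e, div_le_iff₀ (by positivity)] at h2
    linarith
  exact le_of_mul_le_mul_left h3 (by positivity)

/-- A set of integers in a short interval can be enlarged to any prescribed cardinality, losing at
most a factor `2` in the normalised GCD sum. -/
lemma exists_card_eq_gcdForm_ge (A : Finset ℕ) (hA : A.Nonempty) (hpos : ∀ a ∈ A, 0 < a)
    (hA32 : ∀ a ∈ A, ∀ b ∈ A, 2 * a ≤ 3 * b) {N : ℕ} (hN : A.card ≤ N) :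
    ∃ M : Finset ℕ, (∀ m ∈ M, 0 < m) ∧ M.card = N ∧ (∀ m ∈ M, ∀ n ∈ M, m ≤ 2 * n) ∧
      (N : ℝ) * ∑ a ∈ A, ∑ b ∈ A, gcdKernel a b
        ≤ 2 * A.card * ∑ m ∈ M, ∑ n ∈ M, gcdKernel m n := by
  set D := ∏ a ∈ A, a with hD
  have hD0 : 0 < D := Finset.prod_pos hpos
  have hA0 : 0 < A.card := hA.card_pos
  have hN0 : 0 < N := hA0.trans_le hN
  set t : ℕ → ℕ := fun i => 1 + D * (3 * N + i) with ht
  have ht0 : ∀ i, 0 < t i := fun i => by simp only [ht]; omega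
  have hcop : ∀ i, ∀ a ∈ A, Nat.Coprime (t i) a := by
    intro i a ha
    have hdvd : a ∣ D := Finset.dvd_prod_of_mem (fun a => a) ha
    have : Nat.Coprime (1 + D * (3 * N + i)) D := by simp
    exact Nat.Coprime.coprime_dvd_right hdvd this
  have htinj : ∀ i j, t i = t j → i = j := by
    intro i j h
    have h' : D * (3 * N + i) = D * (3 * N + j) := by simp only [ht] at h; omega
    have := Nat.eq_of_mul_eq_mul_left hD0 h'
    omega
  have hinj : ∀ q : ℕ,
      Set.InjOn (fun x : ℕ × ℕ => t x.1 * x.2) (Finset.range q ×ˢ A : Finset _) := by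
    rintro q ⟨i, a⟩ hx ⟨j, b⟩ hy hxy
    simp only [Finset.coe_product, Set.mem_prod, Finset.mem_coe] at hx hy
    simp only at hxy
    have h1 : t i ∣ t j := (hcop i b hy.2).dvd_of_dvd_mul_right ⟨a, hxy.symm⟩
    have h2 : t j ∣ t i := (hcop j a hx.2).dvd_of_dvd_mul_right ⟨b, hxy⟩
    have hij := htinj i j (Nat.dvd_antisymm h1 h2)
    subst hij
    exact Prod.ext rfl (Nat.eq_of_mul_eq_mul_left (ht0 i) hxy)
  set B : ℕ → Finset ℕ := fun q => (Finset.range q ×ˢ A).image fun x : ℕ × ℕ => t x.1 * x.2 with hB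
  have hBcard : ∀ q, (B q).card = q * A.card := by
    intro q
    rw [hB, Finset.card_image_of_injOn (hinj q)]
    simp
  set q := N / A.card with hq
  have hq1 : 1 ≤ q := Nat.div_pos hN hA0
  have hqN : q * A.card ≤ N := Nat.div_mul_le_self N A.card
  have hqN' : N ≤ (q + 1) * A.card := by
    have := Nat.lt_div_mul_add hA0 (a := N)
    rw [add_mul, one_mul]
    exact this.le
  have hqN_succ : q + 1 ≤ N + 1 := by
    have : q ≤ N := Nat.div_le_self _ _
    omega
  have hsub : B q ⊆ B (q + 1) :=
    Finset.image_subset_image (Finset.product_subset_product_left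
      (Finset.range_mono (Nat.le_succ q)))
  obtain ⟨M, hBM, hMB, hMcard⟩ := Finset.exists_subsuperset_card_eq (n := N) hsub
    (by rw [hBcard]; exact hqN) (by rw [hBcard]; exact hqN')
  have hmem : ∀ m ∈ M, ∃ i < q + 1, ∃ a ∈ A, m = t i * a := by
    intro m hm
    obtain ⟨⟨i, a⟩, hx, rfl⟩ := Finset.mem_image.1 (hMB hm)
    rw [Finset.mem_product, Finset.mem_range] at hx
    exact ⟨i, hx.1, a, hx.2, rfl⟩
  refine ⟨M, ?_, hMcard, ?_, ?_⟩
  · intro m hm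
    obtain ⟨i, _, a, ha, rfl⟩ := hmem m hm
    exact Nat.mul_pos (ht0 i) (hpos a ha)
  · intro m hm n hn
    obtain ⟨i, hi, a, ha, rfl⟩ := hmem m hm
    obtain ⟨j, hj, b, hb, rfl⟩ := hmem n hn
    have hab := hA32 a ha b hb
    have h3 : 3 * t i ≤ 4 * t j := by
      have hi' : i ≤ N := by omega
      have : D * (3 * (3 * N + i)) ≤ D * (4 * (3 * N + j)) := Nat.mul_le_mul_left _ (by omega)
      simp only [ht]
      nlinarith
    have := Nat.mul_le_mul h3 hab
    nlinarith
  · have hS0 : 0 ≤ ∑ a ∈ A, ∑ b ∈ A, gcdKernel a b :=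
      Finset.sum_nonneg fun _ _ => Finset.sum_nonneg fun _ _ => gcdKernel_nonneg _ _
    have hMge : ∑ m ∈ B q, ∑ n ∈ B q, gcdKernel m n ≤ ∑ m ∈ M, ∑ n ∈ M, gcdKernel m n := by
      refine (Finset.sum_le_sum fun m _ => Finset.sum_le_sum_of_subset_of_nonneg hBM
        fun _ _ _ => gcdKernel_nonneg _ _).trans
        (Finset.sum_le_sum_of_subset_of_nonneg hBM fun _ _ _ => Finset.sum_nonneg
          fun _ _ => gcdKernel_nonneg _ _)
    have hBge : q * ∑ a ∈ A, ∑ b ∈ A, gcdKernel a b ≤ ∑ m ∈ B q, ∑ n ∈ B q, gcdKernel m n := by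
      have e : ∀ g : ℕ → ℝ, ∑ m ∈ B q, g m = ∑ i ∈ Finset.range q, ∑ a ∈ A, g (t i * a) := by
        intro g
        rw [hB, Finset.sum_image (hinj q), Finset.sum_product]
      rw [e]
      calc (q : ℝ) * ∑ a ∈ A, ∑ b ∈ A, gcdKernel a b
          = ∑ i ∈ Finset.range q, ∑ a ∈ A, ∑ b ∈ A, gcdKernel a b := by simp
        _ ≤ _ := by
          refine Finset.sum_le_sum fun i hi => Finset.sum_le_sum fun a _ => ?_
          rw [e]
          refine le_trans (le_of_eq ?_) (Finset.single_le_sum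
            (f := fun j => ∑ b ∈ A, gcdKernel (t i * a) (t j * b))
            (fun _ _ => Finset.sum_nonneg fun _ _ => gcdKernel_nonneg _ _) hi)
          exact Finset.sum_congr rfl fun b _ => (gcdKernel_mul_left (ht0 i) a b).symm
    have hN2 : (N : ℝ) ≤ 2 * A.card * q := by
      have : N ≤ 2 * A.card * q := by nlinarith
      exact_mod_cast this
    calc (N : ℝ) * ∑ a ∈ A, ∑ b ∈ A, gcdKernel a b
        ≤ 2 * A.card * q * ∑ a ∈ A, ∑ b ∈ A, gcdKernel a b := by gcongr
      _ = 2 * A.card * (q * ∑ a ∈ A, ∑ b ∈ A, gcdKernel a b) := by ring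
      _ ≤ _ := by gcongr; exact hBge.trans hMge

/-! ### Product weights -/

section ProductWeights

variable {ι : Type*} [Fintype ι]

/-- The integer with exponent vector `e`. -/
def expInt (p : ι → ℕ) (e : ι → Fin 3) : ℕ := ∏ i, p i ^ (e i : ℕ)

/-- The one-prime weight, equal to `1` at the central exponent and to `x` at the other two. -/
noncomputable def localWeight (x : ℝ) (a : Fin 3) : ℝ := if a = 1 then 1 else x

/-- The product weight of an exponent vector. -/
noncomputable def expWeight (f : ι → ℝ) (e : ι → Fin 3) : ℝ := ∏ i, localWeight (f i) (e i)

/-- The one-prime value of the bilinear form with weights `x` and `y`. -/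
noncomputable def localForm (p : ℕ) (x y : ℝ) : ℝ :=
  1 + 2 * x * y + 2 * (x + y) / Real.sqrt p + 2 * x * y / p

lemma localWeight_pos {x : ℝ} (hx : 0 < x) (a : Fin 3) : 0 < localWeight x a := by
  unfold localWeight; split_ifs <;> linarith

lemma localWeight_le_one {x : ℝ} (hx : x ≤ 1) (a : Fin 3) : localWeight x a ≤ 1 := by
  unfold localWeight; split_ifs <;> linarith

lemma localWeight_rpow (x s : ℝ) (a : Fin 3) : localWeight (x ^ s) a = localWeight x a ^ s := by
  unfold localWeight; split_ifs <;> simp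

lemma expWeight_pos {f : ι → ℝ} (hf : ∀ i, 0 < f i) (e : ι → Fin 3) : 0 < expWeight f e :=
  Finset.prod_pos fun i _ => localWeight_pos (hf i) _

lemma expWeight_le_one {f : ι → ℝ} (hf : ∀ i, 0 < f i) (hf1 : ∀ i, f i ≤ 1) (e : ι → Fin 3) :
    expWeight f e ≤ 1 :=
  Finset.prod_le_one (fun i _ => (localWeight_pos (hf i) _).le)
    fun i _ => localWeight_le_one (hf1 i) _

lemma expWeight_rpow {f : ι → ℝ} (hf : ∀ i, 0 < f i) (s : ℝ) (e : ι → Fin 3) :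
    expWeight (fun i => f i ^ s) e = expWeight f e ^ s := by
  unfold expWeight
  rw [← Real.finsetProd_rpow _ _ fun i _ => (localWeight_pos (hf i) _).le]
  exact Finset.prod_congr rfl fun i _ => localWeight_rpow _ _ _

lemma expInt_pos {p : ι → ℕ} (hp : ∀ i, (p i).Prime) (e : ι → Fin 3) : 0 < expInt p e :=
  Finset.prod_pos fun i _ => pow_pos (hp i).pos _

lemma expInt_le {p : ι → ℕ} (hp : ∀ i, (p i).Prime) (e : ι → Fin 3) :
    expInt p e ≤ ∏ i, p i ^ 2 :=
  Finset.prod_le_prod' fun i _ => Nat.pow_le_pow_right (hp i).pos (by omega)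

lemma expInt_injective {p : ι → ℕ} (hp : ∀ i, (p i).Prime) (hinj : Function.Injective p) :
    Function.Injective (expInt p) := by
  intro e e' h
  funext i
  have key : ∀ e : ι → Fin 3, (expInt p e).factorization (p i) = e i := by
    intro e
    unfold expInt
    rw [Nat.factorization_prod fun j _ => pow_ne_zero _ (hp j).ne_zero, Finset.sum_apply',
      Finset.sum_eq_single i]
    · simp [(hp i).factorization_self]
    · intro j _ hj
      have : p j ≠ p i := fun h => hj (hinj h)
      simp [(hp j).factorization, this]
    · simp
  exact Fin.ext (by rw [← key e, ← key e', h])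

lemma gcdKernel_expInt {p : ι → ℕ} (hp : ∀ i, (p i).Prime) (hinj : Function.Injective p)
    (e e' : ι → Fin 3) :
    gcdKernel (expInt p e) (expInt p e') = ∏ i, gcdKernel (p i ^ (e i : ℕ)) (p i ^ (e' i : ℕ)) := by
  have hcop : ∀ i j, i ≠ j → ∀ a b : ℕ, Nat.Coprime (p i ^ a) (p j ^ b) := fun i j hij a b =>
    Nat.Coprime.pow _ _ ((Nat.coprime_primes (hp i) (hp j)).2 fun h => hij (hinj h))
  exact gcdKernel_prod _ _ _ (fun i => pow_pos (hp i).pos _) (fun i => pow_pos (hp i).pos _)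
    (fun i j hij => hcop i j hij _ _) (fun i j hij => hcop i j hij _ _)

lemma sum_localWeight_mul_gcdKernel {p : ℕ} (hp : p.Prime) (x y : ℝ) :
    ∑ a : Fin 3, ∑ b : Fin 3, localWeight x a * localWeight y b *
      gcdKernel (p ^ (a : ℕ)) (p ^ (b : ℕ)) = localForm p x y := by
  have hp0 := hp.pos
  have hp0' : (0 : ℝ) < p := by exact_mod_cast hp0
  have hs : Real.sqrt p * Real.sqrt p = p := Real.mul_self_sqrt hp0'.le
  have hs0 : 0 < Real.sqrt p := Real.sqrt_pos.2 hp0'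
  have hself : ∀ m : ℕ, 0 < m → gcdKernel m m = 1 := by
    intro m hm
    have : (0 : ℝ) < m := by exact_mod_cast hm
    rw [gcdKernel_eq_div hm hm, Nat.gcd_self, Real.mul_self_sqrt this.le, div_self this.ne']
  have h01 : gcdKernel 1 p = 1 / Real.sqrt p := by
    rw [gcdKernel_eq_div one_pos hp0]; simp
  have h02 : gcdKernel 1 (p ^ 2) = 1 / p := by
    rw [gcdKernel_eq_div one_pos (pow_pos hp0 2)]
    push_cast
    rw [Real.sqrt_sq hp0'.le]; simp
  have h12 : gcdKernel p (p ^ 2) = 1 / Real.sqrt p := by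
    have := gcdKernel_mul_left hp0 1 p
    rw [mul_one, ← pow_two] at this
    rw [this, h01]
  have h10 := gcdKernel_comm p 1
  have h20 := gcdKernel_comm (p ^ 2) 1
  have h21 := gcdKernel_comm (p ^ 2) p
  have h00 := hself 1 one_pos
  have h11 := hself p hp0
  have h22 := hself (p ^ 2) (pow_pos hp0 2)
  simp only [Fin.sum_univ_three, localWeight, localForm]
  simp [h00, h11, h22, h01, h02, h12, h10, h20, h21, -one_div]
  field_simp
  ring

lemma sum_expWeight_mul_gcdKernel {p : ι → ℕ} (hp : ∀ i, (p i).Prime)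
    (hinj : Function.Injective p) (f g : ι → ℝ) :
    ∑ e, ∑ e', expWeight f e * expWeight g e' * gcdKernel (expInt p e) (expInt p e')
      = ∏ i, localForm (p i) (f i) (g i) := by
  have h1 : ∀ e e', expWeight f e * expWeight g e' * gcdKernel (expInt p e) (expInt p e')
      = ∏ i, (localWeight (f i) (e i) * localWeight (g i) (e' i) *
        gcdKernel (p i ^ (e i : ℕ)) (p i ^ (e' i : ℕ))) := by
    intro e e'
    rw [gcdKernel_expInt hp hinj, expWeight, expWeight, Finset.prod_mul_distrib,
      Finset.prod_mul_distrib]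
  simp_rw [h1]
  have h2 : ∀ h : ι → Fin 3 → ℝ, ∑ e : ι → Fin 3, ∏ i, h i (e i) = ∏ i, ∑ a, h i a := by
    intro h
    rw [Finset.prod_univ_sum, Fintype.piFinset_univ]
  rw [Finset.sum_congr rfl fun e _ => h2 fun i b => localWeight (f i) (e i) *
    localWeight (g i) b * gcdKernel (p i ^ (e i : ℕ)) (p i ^ (b : ℕ))]
  rw [h2 fun i a => ∑ b : Fin 3, localWeight (f i) a * localWeight (g i) b *
    gcdKernel (p i ^ (a : ℕ)) (p i ^ (b : ℕ))]
  exact Finset.prod_congr rfl fun i _ => sum_localWeight_mul_gcdKernel (hp i) _ _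

lemma sum_expWeight_sq (f : ι → ℝ) : ∑ e, expWeight f e ^ 2 = ∏ i, (1 + 2 * f i ^ 2) := by
  have : ∀ e : ι → Fin 3, expWeight f e ^ 2 = ∏ i, localWeight (f i) (e i) ^ 2 := fun e => by
    rw [expWeight, Finset.prod_pow]
  simp_rw [this]
  rw [← Fintype.piFinset_univ, ← Finset.prod_univ_sum (fun _ => Finset.univ)
    fun i a => localWeight (f i) a ^ 2]
  refine Finset.prod_congr rfl fun i _ => ?_
  simp [Fin.sum_univ_three, localWeight]
  ring

/-- Rankin's trick: the form restricted to the vectors of large weight. -/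
lemma half_le_gcdForm_large {p : ι → ℕ} (hp : ∀ i, (p i).Prime)
    (hinj : Function.Injective p) {f : ι → ℝ} (hf : ∀ i, 0 < f i) {y s : ℝ} (hy : 0 ≤ y)
    (hs : 0 ≤ s)
    (hR : y ^ (s / 2) * ∏ i, localForm (p i) (f i ^ (1 - s)) (f i)
      ≤ (∏ i, localForm (p i) (f i) (f i)) / 4) :
    (∏ i, localForm (p i) (f i) (f i)) / 2 ≤
      gcdForm (expInt p) (expWeight f) (Finset.univ.filter fun e => y ≤ expWeight f e ^ 2) := by
  set T := Finset.univ.filter fun e => y ≤ expWeight f e ^ 2 with hT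
  set F : (ι → Fin 3) → (ι → Fin 3) → ℝ := fun e e' =>
    expWeight f e * expWeight f e' * gcdKernel (expInt p e) (expInt p e') with hF
  have hF0 : ∀ e e', 0 ≤ F e e' := fun e e' => mul_nonneg (mul_nonneg (expWeight_pos hf e).le
    (expWeight_pos hf e').le) (gcdKernel_nonneg _ _)
  have hFs : ∀ e e', F e e' = F e' e := fun e e' => by
    simp only [hF]; rw [gcdKernel_comm]; ring
  have hQ := sum_expWeight_mul_gcdKernel hp hinj f f
  have htail : ∑ e ∈ Tᶜ, ∑ e', F e e' ≤ (∏ i, localForm (p i) (f i) (f i)) / 4 := by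
    refine le_trans ?_ hR
    rw [← sum_expWeight_mul_gcdKernel hp hinj, Finset.mul_sum]
    refine (Finset.sum_le_sum fun e he => ?_).trans
      (Finset.sum_le_sum_of_subset_of_nonneg (Finset.subset_univ Tᶜ) fun e _ _ => ?_)
    · rw [Finset.mul_sum]
      refine Finset.sum_le_sum fun e' _ => ?_
      have hlt : expWeight f e ^ 2 < y := by
        simpa [hT] using he
      have hc := expWeight_pos hf e
      have h1 : expWeight f e ≤ y ^ (s / 2) * expWeight (fun i => f i ^ (1 - s)) e := by
        rw [expWeight_rpow hf]
        have h2 : expWeight f e ^ s ≤ y ^ (s / 2) := by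
          calc expWeight f e ^ s = (expWeight f e ^ 2) ^ (s / 2) := by
                rw [← Real.rpow_natCast, ← Real.rpow_mul hc.le]; congr 1; push_cast; ring
            _ ≤ _ := Real.rpow_le_rpow (by positivity) hlt.le (by positivity)
        calc expWeight f e = expWeight f e ^ s * expWeight f e ^ (1 - s) := by
              rw [← Real.rpow_add hc]; simp
          _ ≤ _ := by gcongr
      have h3 := mul_le_mul_of_nonneg_right h1
        (mul_nonneg (expWeight_pos hf e').le (gcdKernel_nonneg (expInt p e) (expInt p e')))
      simp only [hF]
      calc _ = _ := by rw [mul_assoc]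
        _ ≤ _ := h3
        _ = _ := by ring
    · refine mul_nonneg (Real.rpow_nonneg hy _)
        (Finset.sum_nonneg fun e' _ => mul_nonneg (mul_nonneg
        (expWeight_pos (fun i => Real.rpow_pos_of_pos (hf i) _) e).le (expWeight_pos hf e').le)
        (gcdKernel_nonneg _ _))
  have h1 : ∑ e, ∑ e', F e e' = gcdForm (expInt p) (expWeight f) T
      + ∑ e ∈ T, ∑ e' ∈ Tᶜ, F e e' + ∑ e ∈ Tᶜ, ∑ e', F e e' := by
    rw [← Finset.sum_add_sum_compl T, gcdForm, ← Finset.sum_add_distrib]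
    congr 1
    exact Finset.sum_congr rfl fun e _ => (Finset.sum_add_sum_compl T _).symm
  have h2 : ∑ e ∈ T, ∑ e' ∈ Tᶜ, F e e' ≤ ∑ e ∈ Tᶜ, ∑ e', F e e' := by
    rw [Finset.sum_comm]
    refine Finset.sum_le_sum fun e _ => ?_
    rw [Finset.sum_congr rfl fun e' _ => hFs e' e]
    exact Finset.sum_le_sum_of_subset_of_nonneg (Finset.subset_univ T) fun _ _ _ => hF0 _ _
  have h3 : ∑ e, ∑ e', F e e' = ∏ i, localForm (p i) (f i) (f i) := hQ
  linarith

/-- The combinatorial core: product weights produce sets of prescribed cardinality in a dyadic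
interval with a large GCD sum. -/
lemma exists_card_eq_gcd_sum_ge {p : ι → ℕ} (hp : ∀ i, (p i).Prime)
    (hinj : Function.Injective p) {f : ι → ℝ} (hf : ∀ i, 0 < f i) (hf1 : ∀ i, f i ≤ 1)
    {N : ℕ} (hN : 0 < N) {s X : ℝ} (hs : 0 ≤ s)
    (hX : 2 * ∑ i, Real.log (p i) ≤ X)
    (hR : ((∏ i, (1 + 2 * f i ^ 2)) / N) ^ (s / 2) * ∏ i, localForm (p i) (f i ^ (1 - s)) (f i)
      ≤ (∏ i, localForm (p i) (f i) (f i)) / 4) :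
    ∃ M : Finset ℕ, (∀ m ∈ M, 0 < m) ∧ M.card = N ∧ (∀ m ∈ M, ∀ n ∈ M, m ≤ 2 * n) ∧
      N * ∏ i, localForm (p i) (f i) (f i) ≤ 16 * ((Real.log N + 1) * (3 * X + 1)) *
        (∏ i, (1 + 2 * f i ^ 2)) * ∑ m ∈ M, ∑ n ∈ M, gcdKernel m n := by
  set Z := ∏ i, (1 + 2 * f i ^ 2) with hZ
  set Q := ∏ i, localForm (p i) (f i) (f i) with hQ
  have hN' : (0 : ℝ) < N := by exact_mod_cast hN
  have hZ1 : 1 ≤ Z := by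
    have h := Finset.prod_le_prod (s := Finset.univ) (f := fun _ : ι => (1 : ℝ))
      (g := fun i => 1 + 2 * f i ^ 2) (fun _ _ => zero_le_one) fun i _ => by
        linarith [sq_nonneg (f i)]
    rwa [Finset.prod_const_one] at h
  have hQ0 : 0 < Q := Finset.prod_pos fun i _ => by
    have := hf i
    unfold localForm
    positivity
  set T := Finset.univ.filter fun e => Z / N ≤ expWeight f e ^ 2 with hT
  have hform : Q / 2 ≤ gcdForm (expInt p) (expWeight f) T :=
    half_le_gcdForm_large hp hinj hf (by positivity) hs hR
  have hTne : T.Nonempty := by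
    by_contra h
    rw [Finset.not_nonempty_iff_eq_empty] at h
    rw [h] at hform
    simp only [gcdForm, Finset.sum_empty] at hform
    linarith
  have hsq : ∑ e ∈ T, expWeight f e ^ 2 ≤ Z := by
    rw [hZ, ← sum_expWeight_sq]
    exact Finset.sum_le_sum_of_subset_of_nonneg (Finset.subset_univ T) fun _ _ _ => sq_nonneg _
  have hTcard : T.card ≤ N := by
    have h1 : T.card * (Z / N) ≤ Z := by
      rw [← nsmul_eq_mul]
      exact (Finset.card_nsmul_le_sum _ _ _ fun e he => (Finset.mem_filter.1 he).2).trans hsq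
    have h2 : (T.card : ℝ) * Z ≤ N * Z := by
      rw [← mul_div_assoc, div_le_iff₀ hN'] at h1
      linarith
    exact_mod_cast le_of_mul_le_mul_right h2 (by linarith)
  have hcut : ∀ e ∈ T, -Real.log (expWeight f e) / Real.log 2 ≤ Real.log N := by
    intro e he
    have hc := expWeight_pos hf e
    have h1 : (1 : ℝ) / N ≤ expWeight f e ^ 2 :=
      (div_le_div_of_nonneg_right hZ1 hN'.le).trans (Finset.mem_filter.1 he).2
    have h2 := Real.log_le_log (by positivity) h1
    rw [Real.log_div one_ne_zero hN'.ne', Real.log_one, Real.log_pow] at h2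
    push_cast at h2
    have h3 : 0 ≤ Real.log N := Real.log_natCast_nonneg N
    rw [div_le_iff₀ (Real.log_pos (by norm_num))]
    nlinarith [Real.log_two_gt_d9]
  have hlogint : ∀ e, Real.log (expInt p e) / Real.log (3 / 2) ≤ 3 * X := by
    intro e
    have h1 : Real.log (expInt p e) ≤ X := by
      refine le_trans ?_ hX
      have h2 : Real.log (expInt p e) ≤ Real.log ((∏ i, p i ^ 2 : ℕ) : ℝ) :=
        Real.log_le_log (by exact_mod_cast expInt_pos hp e) (by exact_mod_cast expInt_le hp e)
      refine h2.trans (le_of_eq ?_)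
      push_cast
      rw [Real.log_prod fun i _ => by
        have := (hp i).ne_zero
        positivity, Finset.mul_sum]
      exact Finset.sum_congr rfl fun i _ => by rw [Real.log_pow]; norm_num
    have h2 : 0 ≤ Real.log (expInt p e) := Real.log_natCast_nonneg _
    have h3 : 1 / 3 ≤ Real.log (3 / 2) := by
      have := Real.one_sub_inv_le_log_of_pos (x := 3 / 2) (by norm_num)
      norm_num at this ⊢
      linarith
    rw [div_le_iff₀ (by linarith)]
    nlinarith
  set κ : (ι → Fin 3) → ℕ × ℕ := fun e => (⌊-Real.log (expWeight f e) / Real.log 2⌋₊,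
    ⌊Real.log (expInt p e) / Real.log (3 / 2)⌋₊) with hκ
  set K := Finset.range (⌊Real.log N⌋₊ + 1) ×ˢ Finset.range (⌊3 * X⌋₊ + 1) with hK
  have hmaps : ∀ e ∈ T, κ e ∈ K := by
    intro e he
    rw [hK, Finset.mem_product, Finset.mem_range, Finset.mem_range]
    exact ⟨Nat.lt_succ_of_le (Nat.floor_le_floor (hcut e he)),
      Nat.lt_succ_of_le (Nat.floor_le_floor (hlogint e))⟩
  have hX0 : 0 ≤ X := le_trans (mul_nonneg zero_le_two
    (Finset.sum_nonneg fun i _ => Real.log_natCast_nonneg _)) hX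
  have hKcard : (K.card : ℝ) ≤ (Real.log N + 1) * (3 * X + 1) := by
    rw [hK, Finset.card_product, Finset.card_range, Finset.card_range]
    push_cast
    have h3 : 0 ≤ Real.log N := Real.log_natCast_nonneg N
    have h4 := Nat.floor_le h3
    have h5 := Nat.floor_le (show 0 ≤ 3 * X by positivity)
    gcongr
  have hfloor : ∀ (u v b : ℝ), 1 < b → 0 < u → 0 < v → 0 ≤ Real.log v / Real.log b →
      ⌊Real.log u / Real.log b⌋₊ = ⌊Real.log v / Real.log b⌋₊ → u ≤ b * v := by
    intro u v b hb hu hv hv0 h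
    have h1 := Nat.lt_floor_add_one (Real.log u / Real.log b)
    rw [h] at h1
    have h2 := Nat.floor_le hv0
    have hlb := Real.log_pos hb
    have h3 : Real.log u / Real.log b < Real.log v / Real.log b + 1 := by linarith
    rw [div_add_one hlb.ne', div_lt_div_iff_of_pos_right hlb, add_comm,
      ← Real.log_mul (by linarith) hv.ne'] at h3
    exact ((Real.log_lt_log_iff hu (by positivity)).1 h3).le
  have hratio : ∀ e ∈ T, ∀ e' ∈ T, κ e = κ e' → expWeight f e ≤ 2 * expWeight f e' := by
    intro e _ e' _ h
    have hc := expWeight_pos hf e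
    have hc' := expWeight_pos hf e'
    have h1 := (Prod.ext_iff.1 h).1
    simp only [hκ, ← Real.log_inv] at h1
    have h2 := hfloor _ _ 2 (by norm_num) (inv_pos.2 hc') (inv_pos.2 hc)
      (div_nonneg (Real.log_nonneg ((one_le_inv₀ hc).2 (expWeight_le_one hf hf1 e)))
        (Real.log_nonneg (by norm_num))) h1.symm
    rw [← div_eq_mul_inv, le_div_iff₀ hc, inv_mul_le_iff₀ hc'] at h2
    linarith
  obtain ⟨A, hAT, hAne, hAκ, hA⟩ := exists_fiber_le_gcdForm_one (expInt p) (expWeight f) T hTne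
    (expInt_pos hp) (fun e _ => expWeight_pos hf e) κ hmaps hratio hsq (by linarith)
  have hinjOn : Set.InjOn (expInt p) A := (expInt_injective hp hinj).injOn
  have hcardA : (A.image (expInt p)).card = A.card := Finset.card_image_of_injOn hinjOn
  obtain ⟨M, hM0, hMN, hM2, hM⟩ := exists_card_eq_gcdForm_ge (A.image (expInt p)) (hAne.image _)
    (by
      intro a ha
      obtain ⟨e, _, rfl⟩ := Finset.mem_image.1 ha
      exact expInt_pos hp e)
    (by
      intro a ha b hb
      obtain ⟨e, he, rfl⟩ := Finset.mem_image.1 ha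
      obtain ⟨e', he', rfl⟩ := Finset.mem_image.1 hb
      have h1 := (Prod.ext_iff.1 (hAκ e he e' he')).2
      have h2 := hfloor (expInt p e) (expInt p e') (3 / 2) (by norm_num)
        (by exact_mod_cast expInt_pos hp e) (by exact_mod_cast expInt_pos hp e')
        (div_nonneg (Real.log_natCast_nonneg _) (Real.log_nonneg (by norm_num))) h1
      have h3 : (2 : ℝ) * expInt p e ≤ 3 * expInt p e' := by linarith
      exact_mod_cast h3)
    (N := N) (hcardA.trans_le ((Finset.card_le_card hAT).trans hTcard))
  refine ⟨M, hM0, hMN, hM2, ?_⟩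
  have hS : ∑ a ∈ A.image (expInt p), ∑ b ∈ A.image (expInt p), gcdKernel a b
      = gcdForm (expInt p) (fun _ => 1) A := by
    rw [Finset.sum_image hinjOn, gcdForm]
    refine Finset.sum_congr rfl fun a _ => ?_
    rw [Finset.sum_image hinjOn]
    simp
  rw [hS, hcardA] at hM
  set S := ∑ m ∈ M, ∑ n ∈ M, gcdKernel m n with hSdef
  have hS0 : 0 ≤ S := Finset.sum_nonneg fun _ _ => Finset.sum_nonneg fun _ _ => gcdKernel_nonneg _ _
  have hA0 : (0 : ℝ) < A.card := by exact_mod_cast hAne.card_pos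
  have h1 : (A.card : ℝ) * (N * Q) ≤ A.card * (16 * K.card * Z * S) := by
    calc (A.card : ℝ) * (N * Q) = 2 * N * (Q / 2 * A.card) := by ring
      _ ≤ 2 * N * (gcdForm (expInt p) (expWeight f) T * A.card) := by gcongr
      _ ≤ 2 * N * (4 * K.card * Z * gcdForm (expInt p) (fun _ => 1) A) := by gcongr
      _ = 8 * K.card * Z * (N * gcdForm (expInt p) (fun _ => 1) A) := by ring
      _ ≤ 8 * K.card * Z * (2 * A.card * S) := by gcongr
      _ = _ := by ring
  refine (le_of_mul_le_mul_left h1 hA0).trans ?_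
  gcongr

end ProductWeights

/-! ### Local estimates and the choice of weights -/

lemma localForm_rpow_le {p : ℕ} (hp : 0 < p) {x s δ : ℝ} (hx : 0 < x) (hs : 0 ≤ s)
    (hδ1 : δ ≤ 1) (hlog : 0 ≤ -Real.log x) (hslog : s * -Real.log x ≤ δ)
    (hxp : x / Real.sqrt p ≤ δ * x ^ 2) (hpδ : 1 / (p : ℝ) ≤ δ) :
    localForm p (x ^ (1 - s)) x ≤ localForm p x x *
      Real.exp (2 * s * -Real.log x * x ^ 2 * ((1 + δ) * (1 + 2 * δ))) := by
  have hp0 : (0 : ℝ) < p := by exact_mod_cast hp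
  have hsp : 0 < Real.sqrt p := Real.sqrt_pos.2 hp0
  set v := s * -Real.log x with hv
  have hv0 : 0 ≤ v := mul_nonneg hs hlog
  have hδ0 : 0 ≤ δ := hv0.trans hslog
  have hpow : x ^ (1 - s) = x * Real.exp v := by
    rw [Real.rpow_sub hx, Real.rpow_one, Real.rpow_def_of_pos hx, div_eq_mul_inv, ← Real.exp_neg]
    congr 2
    rw [hv]; ring
  have hexp : Real.exp v - 1 ≤ v * (1 + δ) := by
    have h := (abs_le.1 (Real.abs_exp_sub_one_sub_id_le
      (show |v| ≤ 1 by rw [abs_of_nonneg hv0]; linarith))).2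
    nlinarith
  have hQ1 : 1 ≤ localForm p x x := by
    unfold localForm
    have h1 : 0 ≤ 2 * x * x := by positivity
    have h2 : 0 ≤ 2 * (x + x) / Real.sqrt p := by positivity
    have h3 : 0 ≤ 2 * x * x / p := by positivity
    linarith
  have hdiff : localForm p (x ^ (1 - s)) x - localForm p x x
      = (Real.exp v - 1) * (2 * x ^ 2 * (1 + 1 / p) + 2 * (x / Real.sqrt p)) := by
    rw [hpow]; unfold localForm; ring
  have hbr : 2 * x ^ 2 * (1 + 1 / p) + 2 * (x / Real.sqrt p) ≤ 2 * x ^ 2 * (1 + 2 * δ) := by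
    nlinarith [sq_nonneg x]
  have hbr0 : 0 ≤ 2 * x ^ 2 * (1 + 1 / p) + 2 * (x / Real.sqrt p) := by positivity
  set E := 2 * s * -Real.log x * x ^ 2 * ((1 + δ) * (1 + 2 * δ)) with hE
  have hEle : localForm p (x ^ (1 - s)) x - localForm p x x ≤ E := by
    rw [hdiff]
    calc (Real.exp v - 1) * (2 * x ^ 2 * (1 + 1 / p) + 2 * (x / Real.sqrt p))
        ≤ (v * (1 + δ)) * (2 * x ^ 2 * (1 + 2 * δ)) :=
          mul_le_mul hexp hbr hbr0 (by positivity)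
      _ = E := by rw [hE, hv]; ring
  have hE0 : 0 ≤ E := by
    have : E = 2 * v * x ^ 2 * ((1 + δ) * (1 + 2 * δ)) := by rw [hE, hv]; ring
    rw [this]; positivity
  have h1 : E ≤ localForm p x x * E := le_mul_of_one_le_left hE0 hQ1
  have h2 := mul_le_mul_of_nonneg_left (Real.add_one_le_exp E) (zero_le_one.trans hQ1)
  linarith

lemma le_localForm_self {p : ℕ} (hp : 0 < p) {x δ : ℝ} (hx : 0 < x)
    (hxδ : 2 * x ^ 2 + 4 * (x / Real.sqrt p) ≤ δ) :
    (1 + 2 * x ^ 2) * Real.exp ((1 - δ) * (4 * (x / Real.sqrt p))) ≤ localForm p x x := by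
  have hp0 : (0 : ℝ) < p := by exact_mod_cast hp
  have hsp : 0 < Real.sqrt p := Real.sqrt_pos.2 hp0
  set w := 2 * x ^ 2 with hw
  set z := 4 * (x / Real.sqrt p) with hz
  have hw0 : 0 ≤ w := by positivity
  have hz0 : 0 ≤ z := by positivity
  have h1 : 1 + w + z ≤ localForm p x x := by
    have h3 : 0 ≤ 2 * x * x / p := by positivity
    have h4 : localForm p x x = 1 + w + z + 2 * x * x / p := by
      unfold localForm; rw [hw, hz]; ring
    linarith
  have h2 : (1 - δ) * z ≤ Real.log ((1 + w + z) / (1 + w)) := by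
    have h := Real.one_sub_inv_le_log_of_pos (show 0 < (1 + w + z) / (1 + w) by positivity)
    refine le_trans ?_ h
    have e : 1 - ((1 + w + z) / (1 + w))⁻¹ = z / (1 + w + z) := by
      field_simp
      ring
    rw [e, le_div_iff₀ (by positivity)]
    have h5 : (1 - δ) * (1 + w + z) ≤ 1 := by
      nlinarith
    nlinarith
  have h3 : Real.exp ((1 - δ) * z) ≤ (1 + w + z) / (1 + w) := by
    rw [← Real.le_log_iff_exp_le (by positivity)]
    exact h2
  rw [le_div_iff₀ (by positivity)] at h3
  linarith

/-- The GCD sum produced by the weights `f p = √(β / (p u_p²))`, with `β` chosen so that the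
entropy constraint is met. -/
lemma exists_gcd_sum_ge_of_weights {P : Finset ℕ} (hP : ∀ p ∈ P, p.Prime) {u : ℕ → ℝ}
    (hu : ∀ p ∈ P, 0 < u p) {N : ℕ} (hN : 0 < N) {δ β ℓ X : ℝ} (hδ : 0 < δ) (hδ1 : δ ≤ 1 / 100)
    (hβ : 0 < β) (hβS : β * ∑ p ∈ P, 1 / (p * u p) = (1 - 10 * δ) * Real.log N / 2)
    (hℓ : 0 < ℓ) (hX : 2 * ∑ p ∈ P, Real.log p ≤ X)
    (hupper : ∀ p ∈ P, Real.log (p * u p ^ 2 / β) ≤ (1 + 2 * δ) * u p)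
    (hlower : ∀ p ∈ P, 2 / δ ≤ Real.log (p * u p ^ 2 / β))
    (huℓ : ∀ p ∈ P, u p ≤ δ * ℓ) (huβ : ∀ p ∈ P, u p ≤ δ * Real.sqrt β)
    (hpδ : ∀ p ∈ P, 1 / (p : ℝ) ≤ δ)
    (hNℓ : Real.log 4 ≤ δ * Real.log N / (2 * ℓ)) :
    ∃ M : Finset ℕ, (∀ m ∈ M, 0 < m) ∧ M.card = N ∧ (∀ m ∈ M, ∀ n ∈ M, m ≤ 2 * n) ∧
      N * Real.exp (4 * (1 - δ) * (Real.sqrt β * ∑ p ∈ P, 1 / (p * u p))) ≤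
        16 * ((Real.log N + 1) * (3 * X + 1)) * ∑ m ∈ M, ∑ n ∈ M, gcdKernel m n := by
  have hN' : (0 : ℝ) < N := by exact_mod_cast hN
  set p : P → ℕ := fun i => (i : ℕ) with hpdef
  have hp : ∀ i, (p i).Prime := fun i => hP i i.2
  have hp0 : ∀ i, (0 : ℝ) < p i := fun i => by exact_mod_cast (hp i).pos
  have hu0 : ∀ i : P, 0 < u (p i) := fun i => hu i i.2
  set f : P → ℝ := fun i => Real.sqrt β / (Real.sqrt (p i) * u (p i)) with hf
  have hsp : ∀ i, 0 < Real.sqrt (p i) := fun i => Real.sqrt_pos.2 (hp0 i)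
  have hsβ : 0 < Real.sqrt β := Real.sqrt_pos.2 hβ
  have hf0 : ∀ i, 0 < f i := fun i => div_pos hsβ (mul_pos (hsp i) (hu0 i))
  have hfsq : ∀ i, f i ^ 2 = β / (p i * u (p i) ^ 2) := fun i => by
    simp only [hf]
    rw [div_pow, mul_pow, Real.sq_sqrt hβ.le, Real.sq_sqrt (hp0 i).le]
  have hfq : ∀ i, f i / Real.sqrt (p i) = Real.sqrt β * (1 / (p i * u (p i))) := fun i => by
    simp only [hf]
    rw [div_div, mul_right_comm, Real.mul_self_sqrt (hp0 i).le]
    ring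
  have hflog : ∀ i, -Real.log (f i) = Real.log (p i * u (p i) ^ 2 / β) / 2 := fun i => by
    have h := hfsq i
    have h2 : Real.log (f i ^ 2) = -Real.log (p i * u (p i) ^ 2 / β) := by
      rw [h, ← Real.log_inv, inv_div]
    rw [Real.log_pow] at h2
    push_cast at h2
    linarith
  have hlam_lo : ∀ i, 1 / δ ≤ -Real.log (f i) := fun i => by
    have := hlower i i.2
    rw [hflog, show 1 / δ = 2 / δ / 2 by ring]
    linarith
  have hlam_up : ∀ i, -Real.log (f i) ≤ (1 + 2 * δ) / 2 * u (p i) := fun i => by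
    have := hupper i i.2
    rw [hflog]
    linarith
  have hlam0 : ∀ i, 0 ≤ -Real.log (f i) := fun i => (by positivity : 0 ≤ 1 / δ).trans (hlam_lo i)
  have hfδ : ∀ i, f i ≤ δ := fun i => by
    have h1 := Real.add_one_le_exp (-Real.log (f i))
    rw [Real.exp_neg, Real.exp_log (hf0 i)] at h1
    have h2 : 1 / δ ≤ 1 / f i := by
      rw [one_div (f i)]
      linarith [hlam_lo i]
    exact (one_div_le_one_div hδ (hf0 i)).1 h2
  have hfqδ : ∀ i, f i / Real.sqrt (p i) ≤ δ * f i ^ 2 := fun i => by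
    have hup := hu0 i
    have hpp := hp0 i
    rw [hfq, hfsq]
    have e1 : Real.sqrt β * (1 / (p i * u (p i)))
        = Real.sqrt β * u (p i) / (p i * u (p i) ^ 2) := by
      field_simp
    have e2 : δ * (β / (p i * u (p i) ^ 2))
        = Real.sqrt β * (δ * Real.sqrt β) / (p i * u (p i) ^ 2) := by
      rw [show Real.sqrt β * (δ * Real.sqrt β) = δ * (Real.sqrt β * Real.sqrt β) by ring,
        Real.mul_self_sqrt hβ.le]
      ring
    rw [e1, e2]
    have := huβ i i.2
    gcongr
  have hslog : ∀ i, 1 / ℓ * -Real.log (f i) ≤ δ := fun i => by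
    have h1 := hlam_up i
    have h2 := huℓ i i.2
    have h3 := hu0 i
    rw [one_div_mul_eq_div, div_le_iff₀ hℓ]
    nlinarith
  have hsum : ∀ g : ℕ → ℝ, ∑ i, g (p i) = ∑ q ∈ P, g q := fun g => Finset.sum_coe_sort P g
  set Z := ∏ i, (1 + 2 * f i ^ 2) with hZ
  set Q := ∏ i, localForm (p i) (f i) (f i) with hQ
  have hZ0 : 0 < Z := Finset.prod_pos fun i _ => by positivity
  have hloc0 : ∀ i, ∀ x : ℝ, 0 < x → 0 ≤ localForm (p i) x (f i) := fun i x hx => by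
    have := hf0 i
    unfold localForm
    positivity
  have hQ0 : 0 ≤ Q := Finset.prod_nonneg fun i _ => hloc0 i _ (hf0 i)
  have hR : (Z / N) ^ (1 / ℓ / 2) * ∏ i, localForm (p i) (f i ^ (1 - 1 / ℓ)) (f i) ≤ Q / 4 := by
    have h1 : ∏ i, localForm (p i) (f i ^ (1 - 1 / ℓ)) (f i) ≤ Q * Real.exp (∑ i,
        2 * (1 / ℓ) * -Real.log (f i) * f i ^ 2 * ((1 + δ) * (1 + 2 * δ))) := by
      rw [Real.exp_sum, hQ, ← Finset.prod_mul_distrib]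
      exact Finset.prod_le_prod (fun i _ => hloc0 i _ (Real.rpow_pos_of_pos (hf0 i) _))
        fun i _ => localForm_rpow_le (hp i).pos (hf0 i) (by positivity) (by linarith) (hlam0 i)
          (hslog i) (hfqδ i) (hpδ i i.2)
    have h2 : Z ≤ Real.exp (∑ i, 2 * f i ^ 2) := by
      rw [Real.exp_sum]
      exact Finset.prod_le_prod (fun i _ => by positivity) fun i _ => by
        linarith [Real.add_one_le_exp (2 * f i ^ 2)]
    have h3 : (Z / N) ^ (1 / ℓ / 2) ≤
        Real.exp ((∑ i, 2 * f i ^ 2 - Real.log N) * (1 / ℓ / 2)) := by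
      rw [Real.exp_mul, Real.exp_sub, Real.exp_log hN']
      exact Real.rpow_le_rpow (by positivity) (by gcongr) (by positivity)
    have h4 : (∑ i, 2 * f i ^ 2 - Real.log N) * (1 / ℓ / 2) + ∑ i,
        2 * (1 / ℓ) * -Real.log (f i) * f i ^ 2 * ((1 + δ) * (1 + 2 * δ)) ≤ -Real.log 4 := by
      have e1 : (∑ i, 2 * f i ^ 2 - Real.log N) * (1 / ℓ / 2) + ∑ i,
          2 * (1 / ℓ) * -Real.log (f i) * f i ^ 2 * ((1 + δ) * (1 + 2 * δ))
          = 1 / ℓ / 2 * (∑ i, (2 * f i ^ 2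
            + 4 * -Real.log (f i) * f i ^ 2 * ((1 + δ) * (1 + 2 * δ))) - Real.log N) := by
        have hA : ∑ i, 2 * (1 / ℓ) * -Real.log (f i) * f i ^ 2 * ((1 + δ) * (1 + 2 * δ))
            = 1 / ℓ / 2 * ∑ i, 4 * -Real.log (f i) * f i ^ 2 * ((1 + δ) * (1 + 2 * δ)) := by
          rw [Finset.mul_sum]
          exact Finset.sum_congr rfl fun i _ => by ring
        rw [Finset.sum_add_distrib, hA]
        ring
      have e2 : ∀ i, 2 * f i ^ 2 + 4 * -Real.log (f i) * f i ^ 2 * ((1 + δ) * (1 + 2 * δ))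
          ≤ 2 * (1 + 2 * δ) * (1 + 5 * δ) * β * (1 / (p i * u (p i))) := by
        intro i
        have hup := hu0 i
        have hpp := hp0 i
        have hl := hlam_lo i
        rw [div_le_iff₀ hδ] at hl
        have hf2 : 0 ≤ f i ^ 2 := sq_nonneg _
        have a1 : 2 * f i ^ 2 ≤ 2 * δ * (-Real.log (f i) * f i ^ 2) := by nlinarith
        have a2 : -Real.log (f i) * f i ^ 2 ≤ (1 + 2 * δ) / 2 * u (p i) * f i ^ 2 :=
          mul_le_mul_of_nonneg_right (hlam_up i) hf2
        have a3 : u (p i) * f i ^ 2 = β * (1 / (p i * u (p i))) := by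
          rw [hfsq]; field_simp
        have a4 : 0 ≤ -Real.log (f i) * f i ^ 2 := mul_nonneg (hlam0 i) hf2
        have a5 : 2 * δ + 4 * ((1 + δ) * (1 + 2 * δ)) ≤ 4 * (1 + 5 * δ) := by nlinarith
        calc 2 * f i ^ 2 + 4 * -Real.log (f i) * f i ^ 2 * ((1 + δ) * (1 + 2 * δ))
            ≤ (2 * δ + 4 * ((1 + δ) * (1 + 2 * δ))) * (-Real.log (f i) * f i ^ 2) := by linarith
          _ ≤ 4 * (1 + 5 * δ) * (-Real.log (f i) * f i ^ 2) := by gcongr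
          _ ≤ 4 * (1 + 5 * δ) * ((1 + 2 * δ) / 2 * u (p i) * f i ^ 2) := by gcongr
          _ = 2 * (1 + 2 * δ) * (1 + 5 * δ) * (u (p i) * f i ^ 2) := by ring
          _ = _ := by rw [a3]; ring
      have e3 := Finset.sum_le_sum fun i (_ : i ∈ Finset.univ) => e2 i
      rw [← Finset.mul_sum, hsum fun q => 1 / (q * u q), mul_assoc, hβS] at e3
      have e4 : 2 * (1 + 2 * δ) * (1 + 5 * δ) * ((1 - 10 * δ) * Real.log N / 2)
          ≤ (1 - δ) * Real.log N := by
        have : (1 + 2 * δ) * (1 + 5 * δ) * (1 - 10 * δ) ≤ 1 - δ := by nlinarith [pow_pos hδ 3]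
        nlinarith [Real.log_natCast_nonneg N]
      rw [e1]
      calc _ ≤ 1 / ℓ / 2 * ((1 - δ) * Real.log N - Real.log N) := by
            gcongr; exact e3.trans e4
        _ = -(δ * Real.log N / (2 * ℓ)) := by field_simp; ring
        _ ≤ _ := by linarith
    calc (Z / N) ^ (1 / ℓ / 2) * ∏ i, localForm (p i) (f i ^ (1 - 1 / ℓ)) (f i)
        ≤ Real.exp ((∑ i, 2 * f i ^ 2 - Real.log N) * (1 / ℓ / 2)) * (Q * Real.exp (∑ i,
          2 * (1 / ℓ) * -Real.log (f i) * f i ^ 2 * ((1 + δ) * (1 + 2 * δ)))) :=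
          mul_le_mul h3 h1 (Finset.prod_nonneg fun i _ =>
            hloc0 i _ (Real.rpow_pos_of_pos (hf0 i) _)) (Real.exp_pos _).le
      _ = Q * Real.exp ((∑ i, 2 * f i ^ 2 - Real.log N) * (1 / ℓ / 2) + ∑ i,
          2 * (1 / ℓ) * -Real.log (f i) * f i ^ 2 * ((1 + δ) * (1 + 2 * δ))) := by
          rw [Real.exp_add]; ring
      _ ≤ Q * Real.exp (-Real.log 4) := by gcongr
      _ = Q / 4 := by rw [Real.exp_neg, Real.exp_log (by norm_num)]; ring
  obtain ⟨M, hM0, hMN, hM2, hM⟩ := exists_card_eq_gcd_sum_ge (X := X) hp Subtype.val_injective hf0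
    (fun i => (hfδ i).trans (by linarith)) hN (by positivity)
    (by rw [hsum fun q => Real.log q]; exact hX) hR
  refine ⟨M, hM0, hMN, hM2, ?_⟩
  have hgain : Z * Real.exp (4 * (1 - δ) * (Real.sqrt β * ∑ q ∈ P, 1 / (q * u q))) ≤ Q := by
    have e : 4 * (1 - δ) * (Real.sqrt β * ∑ q ∈ P, 1 / (q * u q))
        = ∑ i, (1 - δ) * (4 * (f i / Real.sqrt (p i))) := by
      rw [← hsum fun q => 1 / (q * u q), Finset.mul_sum, Finset.mul_sum]
      exact Finset.sum_congr rfl fun i _ => by rw [hfq]; ring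
    rw [e, Real.exp_sum, hZ, hQ, ← Finset.prod_mul_distrib]
    refine Finset.prod_le_prod (fun i _ => by positivity) fun i _ =>
      le_localForm_self (hp i).pos (hf0 i) ?_
    have h1 : f i ^ 2 ≤ δ ^ 2 := pow_le_pow_left₀ (hf0 i).le (hfδ i) 2
    nlinarith [hfqδ i]
  set S := ∑ m ∈ M, ∑ n ∈ M, gcdKernel m n
  refine le_of_mul_le_mul_left ?_ hZ0
  calc Z * (N * Real.exp (4 * (1 - δ) * (Real.sqrt β * ∑ q ∈ P, 1 / (q * u q))))
      = N * (Z * Real.exp (4 * (1 - δ) * (Real.sqrt β * ∑ q ∈ P, 1 / (q * u q)))) := by ring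
    _ ≤ N * Q := by gcongr
    _ ≤ _ := hM
    _ = _ := by ring

/-! ### The sum over primes -/

lemma log_div_le_sum_Ico_one_div (a b : ℕ) :
    Real.log (((b : ℝ) + 1) / (a + 1)) ≤ ∑ j ∈ Finset.Ico a b, 1 / ((j : ℝ) + 1) := by
  rcases le_or_gt a b with hab | hab
  · induction b, hab using Nat.le_induction with
    | base => rw [div_self (by positivity), Real.log_one, Finset.Ico_self, Finset.sum_empty]
    | succ n hn ih =>
      rw [Finset.sum_Ico_succ_top hn]
      have h : (((n + 1 : ℕ) : ℝ) + 1) / (a + 1)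
          = ((n : ℝ) + 1) / (a + 1) * (1 + 1 / ((n : ℝ) + 1)) := by
        push_cast
        field_simp
      rw [h, Real.log_mul (by positivity) (by positivity)]
      have := Real.log_le_sub_one_of_pos (show 0 < 1 + 1 / ((n : ℝ) + 1) by positivity)
      linarith
  · rw [Finset.Ico_eq_empty (by omega), Finset.sum_empty]
    refine Real.log_nonpos (by positivity) ?_
    rw [div_le_one (by positivity)]
    have : (b : ℝ) ≤ a := by exact_mod_cast hab.le
    linarith

/-- The primes in `(L e^a, L e^b]`. -/
noncomputable def primesBetween (L a b : ℝ) : Finset ℕ :=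
  (Finset.Ioc ⌊L * Real.exp a⌋₊ ⌊L * Real.exp b⌋₊).filter Nat.Prime

lemma mem_primesBetween {L a b : ℝ} (hL : 0 < L) {p : ℕ} :
    p ∈ primesBetween L a b ↔
      p.Prime ∧ a < Real.log p - Real.log L ∧ Real.log p - Real.log L ≤ b := by
  unfold primesBetween
  rw [Finset.mem_filter, Finset.mem_Ioc, and_comm]
  refine and_congr_right fun hp => ?_
  have hp0 : (0 : ℝ) < p := by exact_mod_cast hp.pos
  rw [Nat.floor_lt (by positivity), Nat.le_floor_iff (by positivity),
    ← Real.log_lt_log_iff (by positivity) hp0, ← Real.log_le_log_iff hp0 (by positivity),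
    Real.log_mul hL.ne' (Real.exp_pos _).ne', Real.log_mul hL.ne' (Real.exp_pos _).ne',
    Real.log_exp, Real.log_exp]
  constructor <;> rintro ⟨h1, h2⟩ <;> constructor <;> linarith

lemma sum_Ico_div_le_sum_primesBetween {C : ℝ} (hC : ∀ x y : ℝ, 1 ≤ x → x ≤ y →
      Real.log y - Real.log x - C ≤
        ∑ p ∈ (Finset.Ioc ⌊x⌋₊ ⌊y⌋₊).filter Nat.Prime, Real.log p / p)
    {L a b W : ℝ} (hL : 1 < L) (ha : 0 ≤ a) (hb : 0 ≤ b) (hW : 0 < W) :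
    (W - C) / (W * (Real.log L + b)) *
        ∑ j ∈ Finset.Ico ⌈a / W⌉₊ ⌊b / W⌋₊, 1 / ((j : ℝ) + 1) ≤
      ∑ p ∈ primesBetween L a b, 1 / (p * (Real.log p - Real.log L)) := by
  have hL0 : 0 < L := by linarith
  have hℓ : 0 < Real.log L := Real.log_pos hL
  set B : ℕ → Finset ℕ := fun j => primesBetween L (j * W) ((j + 1) * W) with hB
  have hjW : ∀ j : ℕ, 0 ≤ (j : ℝ) * W := fun j => by positivity
  have hlo : ∀ j ∈ Finset.Ico ⌈a / W⌉₊ ⌊b / W⌋₊, a ≤ j * W := fun j hj =>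
    (div_le_iff₀ hW).1 (Nat.ceil_le.1 (Finset.mem_Ico.1 hj).1)
  have hhi : ∀ j ∈ Finset.Ico ⌈a / W⌉₊ ⌊b / W⌋₊, ((j : ℝ) + 1) * W ≤ b := fun j hj => by
    have h := (Nat.le_floor_iff (by positivity)).1 (Nat.succ_le_of_lt (Finset.mem_Ico.1 hj).2)
    push_cast at h
    exact (le_div_iff₀ hW).1 h
  have hsub : (Finset.Ico ⌈a / W⌉₊ ⌊b / W⌋₊).biUnion B ⊆ primesBetween L a b := by
    intro p hp
    obtain ⟨j, hj, hpj⟩ := Finset.mem_biUnion.1 hp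
    obtain ⟨h1, h2, h3⟩ := (mem_primesBetween hL0).1 hpj
    exact (mem_primesBetween hL0).2 ⟨h1, (hlo j hj).trans_lt h2, h3.trans (hhi j hj)⟩
  have hdisj : ∀ i j : ℕ, i < j → Disjoint (B i) (B j) := fun i j hij => by
    refine Finset.disjoint_left.2 fun p hi hj => ?_
    obtain ⟨-, -, h3⟩ := (mem_primesBetween hL0).1 hi
    obtain ⟨-, h2, -⟩ := (mem_primesBetween hL0).1 hj
    have h : (i : ℝ) + 1 ≤ j := by exact_mod_cast hij
    nlinarith
  have hblock : ∀ j ∈ Finset.Ico ⌈a / W⌉₊ ⌊b / W⌋₊,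
      (W - C) / (W * (Real.log L + b)) * (1 / ((j : ℝ) + 1)) ≤
        ∑ p ∈ B j, 1 / (p * (Real.log p - Real.log L)) := fun j hj => by
    have hmert : W - C ≤ ∑ p ∈ B j, Real.log p / p := by
      have h := hC (L * Real.exp (j * W)) (L * Real.exp ((j + 1) * W))
        (one_le_mul_of_one_le_of_one_le hL.le (Real.one_le_exp (hjW j)))
        (by gcongr; linarith)
      rw [Real.log_mul hL0.ne' (Real.exp_pos _).ne', Real.log_mul hL0.ne' (Real.exp_pos _).ne',
        Real.log_exp, Real.log_exp] at h
      refine le_trans (le_of_eq ?_) h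
      ring
    have hterm : ∀ p ∈ B j, 1 / ((Real.log L + b) * ((j + 1) * W)) * (Real.log p / p) ≤
        1 / (p * (Real.log p - Real.log L)) := fun p hp => by
      obtain ⟨h1, h2, h3⟩ := (mem_primesBetween hL0).1 hp
      have hp0 : (0 : ℝ) < p := by exact_mod_cast h1.pos
      have hu : 0 < Real.log p - Real.log L := (hjW j).trans_lt h2
      have h4 : Real.log p ≤ Real.log L + b := by linarith [hhi j hj]
      have h5 : Real.log p * (Real.log p - Real.log L) ≤ (Real.log L + b) * ((j + 1) * W) :=
        mul_le_mul h4 h3 hu.le (by linarith)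
      rw [one_div_mul_eq_div, div_div, div_le_div_iff₀ (by positivity) (by positivity)]
      nlinarith
    calc (W - C) / (W * (Real.log L + b)) * (1 / ((j : ℝ) + 1))
        = 1 / ((Real.log L + b) * ((j + 1) * W)) * (W - C) := by
          field_simp
      _ ≤ 1 / ((Real.log L + b) * ((j + 1) * W)) * ∑ p ∈ B j, Real.log p / p := by
          gcongr
      _ ≤ _ := by
          rw [Finset.mul_sum]
          exact Finset.sum_le_sum hterm
  calc _ ≤ ∑ j ∈ Finset.Ico ⌈a / W⌉₊ ⌊b / W⌋₊, ∑ p ∈ B j,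
        1 / (p * (Real.log p - Real.log L)) := by
        rw [Finset.mul_sum]
        exact Finset.sum_le_sum hblock
    _ = ∑ p ∈ (Finset.Ico ⌈a / W⌉₊ ⌊b / W⌋₊).biUnion B, 1 / (p * (Real.log p - Real.log L)) := by
        rw [Finset.sum_biUnion]
        intro i _ j _ hij
        rcases lt_or_gt_of_ne hij with h | h
        · exact hdisj i j h
        · exact (hdisj j i h).symm
    _ ≤ _ := by
        refine Finset.sum_le_sum_of_subset_of_nonneg hsub fun p hp _ => ?_
        obtain ⟨-, h2, -⟩ := (mem_primesBetween hL0).1 hp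
        have : 0 < Real.log p - Real.log L := ha.trans_lt h2
        positivity

lemma eventually_le_sum_primesBetween {δ : ℝ} (hδ : 0 < δ) (hδ1 : δ ≤ 1 / 100) :
    ∀ᶠ L : ℝ in Filter.atTop,
      (1 - 3 * δ) * (Real.log (Real.log L) / Real.log L) ≤
        ∑ p ∈ primesBetween L (Real.log (Real.log L) ^ 2) (δ * Real.log L),
          1 / (p * (Real.log p - Real.log L)) := by
  obtain ⟨C, hC0, hC⟩ := exists_sub_le_sum_log_div_prime
  set W := C / δ with hWdef
  have hW : 0 < W := div_pos hC0 hδ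
  have hCW : C = δ * W := by rw [hWdef]; field_simp
  have hexp : ∀ᶠ t : ℝ in Filter.atTop, (t ^ 2 + 2 * W) / δ ≤ Real.exp (δ * t) := by
    have h1 : (fun t : ℝ => t ^ 2) =o[Filter.atTop] fun t => Real.exp (δ * t) :=
      isLittleO_pow_exp_pos_mul_atTop 2 hδ
    have h0 : (fun t : ℝ => t ^ 0) =o[Filter.atTop] fun t => Real.exp (δ * t) :=
      isLittleO_pow_exp_pos_mul_atTop 0 hδ
    have h2 := (h1.add (h0.const_mul_left (2 * W))).const_mul_left (1 / δ)
    filter_upwards [h2.bound one_pos] with t ht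
    rw [Real.norm_eq_abs, Real.norm_eq_abs, abs_of_pos (Real.exp_pos _), one_mul] at ht
    refine le_trans (le_of_eq ?_) ((le_abs_self _).trans ht)
    ring
  have htt := Real.tendsto_log_atTop.comp Real.tendsto_log_atTop
  filter_upwards [htt.eventually hexp, htt.eventually (Filter.eventually_ge_atTop 1),
    Filter.eventually_gt_atTop 1] with L h1 h2 hL
  simp only [Function.comp_apply] at h1 h2
  set ℓ := Real.log L with hℓdef
  have hℓ : 0 < ℓ := Real.log_pos hL
  set t := Real.log ℓ with ht
  have hmain := sum_Ico_div_le_sum_primesBetween hC hL (sq_nonneg t)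
    (show 0 ≤ δ * ℓ by positivity) hW
  rw [← hℓdef] at hmain
  refine le_trans ?_ hmain
  have hsum : (1 - δ) * t ≤
      ∑ j ∈ Finset.Ico ⌈t ^ 2 / W⌉₊ ⌊δ * ℓ / W⌋₊, 1 / ((j : ℝ) + 1) := by
    refine le_trans ?_ (log_div_le_sum_Ico_one_div _ _)
    rw [Real.le_log_iff_exp_le (by positivity)]
    have hJ1 : δ * ℓ / W ≤ (⌊δ * ℓ / W⌋₊ : ℝ) + 1 := (Nat.lt_floor_add_one _).le
    have hJ0 : (⌈t ^ 2 / W⌉₊ : ℝ) + 1 ≤ t ^ 2 / W + 2 := by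
      linarith [Nat.ceil_lt_add_one (show 0 ≤ t ^ 2 / W by positivity)]
    calc Real.exp ((1 - δ) * t) = ℓ / Real.exp (δ * t) := by
          rw [show (1 - δ) * t = t - δ * t by ring, Real.exp_sub, ht, Real.exp_log hℓ]
      _ ≤ ℓ / ((t ^ 2 + 2 * W) / δ) := by gcongr
      _ = (δ * ℓ / W) / (t ^ 2 / W + 2) := by field_simp
      _ ≤ _ := by gcongr
  have hcoef : (W - C) / (W * (ℓ + δ * ℓ)) = (1 - δ) / ((1 + δ) * ℓ) := by
    rw [hCW]; field_simp
  rw [hcoef]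
  calc (1 - 3 * δ) * (t / ℓ) ≤ (1 - δ) ^ 2 / (1 + δ) * (t / ℓ) := by
        gcongr
        rw [le_div_iff₀ (by linarith)]
        nlinarith
    _ = (1 - δ) / ((1 + δ) * ℓ) * ((1 - δ) * t) := by field_simp
    _ ≤ _ := by
        gcongr
        exact div_nonneg (by linarith) (by positivity)

lemma sum_primesBetween_le {L a b : ℝ} (hL : 1 ≤ L) (ha : 1 ≤ a) (hb : b ≤ Real.log L) :
    ∑ p ∈ primesBetween L a b, 1 / (p * (Real.log p - Real.log L)) ≤ 1 + 2 * Real.log L := by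
  have hL0 : 0 < L := by linarith
  have hsub : primesBetween L a b ⊆ Finset.Icc 1 ⌊L ^ 2⌋₊ := fun p hp => by
    obtain ⟨h1, -, h3⟩ := (mem_primesBetween hL0).1 hp
    have hp0 : (0 : ℝ) < p := by exact_mod_cast h1.pos
    refine Finset.mem_Icc.2 ⟨h1.one_le, Nat.le_floor ?_⟩
    rw [← Real.log_le_log_iff hp0 (by positivity), Real.log_pow]
    push_cast
    linarith
  calc _ ≤ ∑ p ∈ primesBetween L a b, (1 / p : ℝ) := by
        refine Finset.sum_le_sum fun p hp => ?_
        obtain ⟨h1, h2, -⟩ := (mem_primesBetween hL0).1 hp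
        have hp0 : (0 : ℝ) < p := by exact_mod_cast h1.pos
        gcongr
        nlinarith
    _ ≤ ∑ p ∈ Finset.Icc 1 ⌊L ^ 2⌋₊, (1 / p : ℝ) :=
        Finset.sum_le_sum_of_subset_of_nonneg hsub fun _ _ _ => by positivity
    _ = (harmonic ⌊L ^ 2⌋₊ : ℝ) := by
        rw [harmonic_eq_sum_Icc]
        push_cast
        exact Finset.sum_congr rfl fun _ _ => one_div _
    _ ≤ 1 + Real.log ⌊L ^ 2⌋₊ := harmonic_le_one_add_log _
    _ ≤ 1 + Real.log (L ^ 2) := by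
        have h1 : 1 ≤ ⌊L ^ 2⌋₊ := Nat.le_floor (by push_cast; nlinarith)
        have h2 : (0 : ℝ) < ⌊L ^ 2⌋₊ := by exact_mod_cast h1
        gcongr
        exact Nat.floor_le (by positivity)
    _ = _ := by rw [Real.log_pow]; push_cast; ring

lemma sum_log_primesBetween_le {L a b : ℝ} (hL : 1 ≤ L) (hb : b ≤ Real.log L) :
    2 * ∑ p ∈ primesBetween L a b, Real.log p ≤ 4 * L ^ 3 := by
  have hL0 : 0 < L := by linarith
  have hℓ : 0 ≤ Real.log L := Real.log_nonneg hL
  have hcard : ((primesBetween L a b).card : ℝ) ≤ L ^ 2 := by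
    have h1 : (primesBetween L a b).card ≤ ⌊L * Real.exp b⌋₊ := by
      refine (Finset.card_filter_le _ _).trans ?_
      rw [Nat.card_Ioc]
      exact Nat.sub_le _ _
    calc ((primesBetween L a b).card : ℝ) ≤ ⌊L * Real.exp b⌋₊ := by exact_mod_cast h1
      _ ≤ L * Real.exp b := Nat.floor_le (by positivity)
      _ ≤ L * Real.exp (Real.log L) := by gcongr
      _ = L ^ 2 := by rw [Real.exp_log hL0]; ring
  have hle : ∀ p ∈ primesBetween L a b, Real.log p ≤ 2 * Real.log L := fun p hp => by
    obtain ⟨-, -, h3⟩ := (mem_primesBetween hL0).1 hp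
    linarith
  have hlogL : Real.log L ≤ L := (Real.log_le_sub_one_of_pos hL0).trans (by linarith)
  have h := Finset.sum_le_card_nsmul _ _ _ hle
  rw [nsmul_eq_mul] at h
  have h2 : ((primesBetween L a b).card : ℝ) * (2 * Real.log L) ≤ L ^ 2 * (2 * L) := by gcongr
  linarith

/-! ### Conclusion -/

lemma sqrt_mul_le_of_sum_ge {δ L ℓ t S : ℝ} (hδ : 0 < δ) (hδ1 : δ ≤ 1 / 100) (hL : 0 ≤ L)
    (ht : 0 ≤ t / ℓ) (hS0 : 0 < S) (hS : (1 - 3 * δ) * (t / ℓ) ≤ S) :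
    2 * Real.sqrt 2 * (1 - 11 * δ) * Real.sqrt (L * t / ℓ) ≤
      4 * (1 - δ) * (Real.sqrt ((1 - 10 * δ) * L / (2 * S)) * S) := by
  have h10 : 0 ≤ 1 - 10 * δ := by linarith
  set β := (1 - 10 * δ) * L / (2 * S) with hβ
  have hβ0 : 0 ≤ β := by positivity
  have hsq : Real.sqrt β * S = Real.sqrt ((1 - 10 * δ) * L * S / 2) := by
    rw [eq_comm, Real.sqrt_eq_iff_mul_self_eq (by
      have : 0 ≤ 1 - 10 * δ := by linarith
      positivity) (by positivity)]
    rw [mul_mul_mul_comm, Real.mul_self_sqrt hβ0, hβ]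
    field_simp
  have hY : Real.sqrt 2 * (1 - 10 * δ) * Real.sqrt (L * t / ℓ) ≤ 2 * (Real.sqrt β * S) := by
    refine (sq_le_sq₀ (by positivity) (by positivity)).1 ?_
    rw [hsq, mul_pow, mul_pow, mul_pow, Real.sq_sqrt (by norm_num),
      Real.sq_sqrt (by rw [mul_div_assoc]; positivity), Real.sq_sqrt (by positivity)]
    have h1 : (1 - 10 * δ) * (t / ℓ) ≤ S := by
      refine le_trans ?_ hS
      gcongr
      linarith
    calc 2 * (1 - 10 * δ) ^ 2 * (L * t / ℓ)
        = 2 * ((1 - 10 * δ) * L) * ((1 - 10 * δ) * (t / ℓ)) := by ring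
      _ ≤ 2 * ((1 - 10 * δ) * L) * S := by gcongr
      _ = _ := by ring
  have hY0 : 0 ≤ Real.sqrt 2 * Real.sqrt (L * t / ℓ) := by positivity
  calc 2 * Real.sqrt 2 * (1 - 11 * δ) * Real.sqrt (L * t / ℓ)
      ≤ 2 * (1 - δ) * (Real.sqrt 2 * (1 - 10 * δ) * Real.sqrt (L * t / ℓ)) := by
        nlinarith [mul_nonneg (sq_nonneg δ) hY0]
    _ ≤ 2 * (1 - δ) * (2 * (Real.sqrt β * S)) := by
        have : 0 ≤ 1 - δ := by linarith
        gcongr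
    _ = _ := by ring

lemma eventually_pow_five_le_exp : ∀ᶠ x : ℝ in Filter.atTop, x ^ 5 ≤ Real.exp x := by
  filter_upwards [(Real.isLittleO_pow_exp_atTop (n := 5)).bound one_pos] with x hx
  rw [Real.norm_eq_abs, Real.norm_eq_abs, abs_of_pos (Real.exp_pos _), one_mul] at hx
  exact (le_abs_self _).trans hx

lemma log_four_le_of_pow_le {δ L ℓ : ℝ} (hδ : 0 < δ) (hℓδ : 4 / δ ≤ ℓ) (hℓ : 2 ≤ ℓ)
    (hℓL : ℓ ^ 5 ≤ L) : Real.log 4 ≤ δ * L / (2 * ℓ) := by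
  rw [le_div_iff₀ (by positivity)]
  rw [div_le_iff₀ hδ] at hℓδ
  have h1 : Real.log 4 ≤ 3 := (Real.log_le_sub_one_of_pos (by norm_num)).trans (by norm_num)
  have h3 : 2 ≤ ℓ ^ 3 := hℓ.trans (le_self_pow₀ (by linarith) (by norm_num))
  calc Real.log 4 * (2 * ℓ) ≤ 3 * (2 * ℓ) := by gcongr
    _ ≤ 4 * (ℓ * 2) := by linarith
    _ ≤ (ℓ * δ) * (ℓ * ℓ ^ 3) := by gcongr
    _ = δ * ℓ ^ 5 := by ring
    _ ≤ δ * L := by gcongr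

lemma poly_le_pow_five {L : ℝ} (hL : 26 ≤ L) : (L + 1) * (3 * (4 * L ^ 3) + 1) ≤ L ^ 5 := by
  have h1 : 1 ≤ L := by linarith
  have h2 : L ≤ L ^ 4 := le_self_pow₀ h1 (by norm_num)
  have h3 : L ^ 3 ≤ L ^ 4 := pow_le_pow_right₀ h1 (by norm_num)
  have h4 : 1 ≤ L ^ 4 := one_le_pow₀ h1
  have h5 : 26 * L ^ 4 ≤ L * L ^ 4 := by gcongr
  linarith

lemma entropy_param_bounds {δ L ℓ S : ℝ} (hδ : 0 < δ) (hδ1 : δ ≤ 1 / 100) (hL : 0 < L)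
    (hℓ : 4 ≤ ℓ) (hℓL : ℓ ^ 5 ≤ L) (hS1 : 1 / ℓ ≤ S) (hS3 : S ≤ 3 * ℓ) :
    L / (10 * ℓ) ≤ (1 - 10 * δ) * L / (2 * S) ∧ (1 - 10 * δ) * L / (2 * S) ≤ L * ℓ ∧
      ℓ ≤ Real.sqrt ((1 - 10 * δ) * L / (2 * S)) := by
  have hℓ0 : 0 < ℓ := by linarith
  have hS0 : 0 < S := (by positivity : 0 < 1 / ℓ).trans_le hS1
  set β := (1 - 10 * δ) * L / (2 * S) with hβ
  have hβlo : L / (10 * ℓ) ≤ β := by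
    rw [hβ, div_le_div_iff₀ (by positivity) (by positivity)]
    have h1 : L * (2 * S) ≤ L * (6 * ℓ) := mul_le_mul_of_nonneg_left (by linarith) hL.le
    have h2 : 0 ≤ L * ℓ := by positivity
    nlinarith
  have hβhi : β ≤ L * ℓ := by
    rw [hβ, div_le_iff₀ (by positivity)]
    have h1 : 1 ≤ S * ℓ := (div_le_iff₀ hℓ0).1 hS1
    nlinarith
  have hℓβ : ℓ ≤ Real.sqrt β := by
    refine Real.le_sqrt_of_sq_le (le_trans ?_ hβlo)
    rw [le_div_iff₀ (by positivity)]
    refine le_trans ?_ hℓL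
    have : 10 ≤ ℓ ^ 2 := by nlinarith
    nlinarith [pow_pos hℓ0 3]
  exact ⟨hβlo, hβhi, hℓβ⟩

lemma exists_gcd_sum_ge_of_large {δ : ℝ} (hδ : 0 < δ) (hδ1 : δ ≤ 1 / 100) {N : ℕ} (hN : 0 < N)
    {L ℓ t : ℝ} (hL : L = Real.log N) (hℓ : ℓ = Real.log L) (ht : t = Real.log ℓ)
    (hS : (1 - 3 * δ) * (t / ℓ) ≤
      ∑ p ∈ primesBetween L (t ^ 2) (δ * ℓ), 1 / (p * (Real.log p - ℓ)))
    (ht2 : 2 ≤ t) (htδ : 2 / δ ≤ t ^ 2 - t) (htδ2 : t + Real.log 10 ≤ δ * t ^ 2)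
    (hlogδ : ∀ u : ℝ, t ^ 2 ≤ u → 2 * Real.log u ≤ δ * u)
    (hℓδ : 4 / δ ≤ ℓ) (hℓL : ℓ ^ 5 ≤ L) (hL26 : 26 ≤ L) :
    ∃ M : Finset ℕ, (∀ m ∈ M, 0 < m) ∧ M.card = N ∧ (∀ m ∈ M, ∀ n ∈ M, m ≤ 2 * n) ∧
      N * Real.exp (2 * Real.sqrt 2 * (1 - 11 * δ) * Real.sqrt (L * t / ℓ)) ≤
        16 * L ^ 5 * ∑ m ∈ M, ∑ n ∈ M, gcdKernel m n := by
  have hL0 : 0 < L := by linarith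
  have hℓ400 : 400 ≤ ℓ := by
    refine le_trans ?_ hℓδ
    rw [le_div_iff₀ hδ]
    linarith
  have hℓ0 : 0 < ℓ := by linarith
  set P := primesBetween L (t ^ 2) (δ * ℓ) with hP
  set u : ℕ → ℝ := fun p => Real.log p - ℓ with hu
  set S := ∑ p ∈ P, 1 / (p * u p) with hSdef
  have hbℓ : δ * ℓ ≤ Real.log L := by rw [← hℓ]; nlinarith
  have hPmem : ∀ p ∈ P, p.Prime ∧ t ^ 2 < u p ∧ u p ≤ δ * ℓ := fun p hp => by
    have h := (mem_primesBetween hL0).1 hp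
    rw [← hℓ] at h
    exact h
  have hu4 : ∀ p ∈ P, 4 < u p := fun p hp => by nlinarith [(hPmem p hp).2.1]
  have hS1 : 1 / ℓ ≤ S := by
    refine le_trans ?_ hS
    rw [← mul_div_assoc]
    gcongr
    nlinarith
  have hS0 : 0 < S := (by positivity : 0 < 1 / ℓ).trans_le hS1
  have hS3 : S ≤ 3 * ℓ := by
    have h := sum_primesBetween_le (L := L) (a := t ^ 2) (b := δ * ℓ) (by linarith)
      (by nlinarith) hbℓ
    rw [← hℓ] at h
    exact h.trans (by linarith)
  set β := (1 - 10 * δ) * L / (2 * S) with hβ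
  have hβ0 : 0 < β := div_pos (mul_pos (by linarith) hL0) (by positivity)
  obtain ⟨hβlo, hβhi, hℓβ⟩ :=
    entropy_param_bounds hδ hδ1 hL0 (by linarith) hℓL hS1 hS3
  rw [← hβ] at hβlo hβhi hℓβ
  have hlog : ∀ p ∈ P, Real.log (p * u p ^ 2 / β) =
      ℓ + u p + 2 * Real.log (u p) - Real.log β := fun p hp => by
    have hp0 : (0 : ℝ) < p := by exact_mod_cast (hPmem p hp).1.pos
    have hup : 0 < u p := by linarith [hu4 p hp]
    rw [Real.log_div (by positivity) hβ0.ne', Real.log_mul hp0.ne' (by positivity), Real.log_pow]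
    simp only [hu]
    push_cast
    ring
  have hlogβlo : ℓ - (Real.log 10 + t) ≤ Real.log β := by
    have h := Real.log_le_log (by positivity) hβlo
    rwa [Real.log_div hL0.ne' (by positivity), Real.log_mul (by norm_num) hℓ0.ne', ← hℓ,
      ← ht] at h
  have hlogβhi : Real.log β ≤ ℓ + t := by
    have h := Real.log_le_log hβ0 hβhi
    rwa [Real.log_mul hL0.ne' hℓ0.ne', ← hℓ, ← ht] at h
  obtain ⟨M, hM0, hMN, hM2, hM⟩ := exists_gcd_sum_ge_of_weights (P := P) (u := u) (β := β)
    (ℓ := ℓ) (X := 4 * L ^ 3) (fun p hp => (hPmem p hp).1) (fun p hp => by linarith [hu4 p hp])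
    hN hδ hδ1 hβ0 (by rw [← hL, ← hSdef, hβ]; field_simp) hℓ0
    (sum_log_primesBetween_le (by linarith) hbℓ)
    (fun p hp => by
      rw [hlog p hp]
      have h1 := (hPmem p hp).2.1.le
      have h2 := hlogδ _ h1
      nlinarith)
    (fun p hp => by
      rw [hlog p hp]
      have h1 := (hPmem p hp).2.1.le
      have h2 := Real.log_nonneg (show 1 ≤ u p by linarith [hu4 p hp])
      linarith)
    (fun p hp => (hPmem p hp).2.2)
    (fun p hp => (hPmem p hp).2.2.trans (by gcongr))
    (fun p hp => by
      have hp0 : (0 : ℝ) < p := by exact_mod_cast (hPmem p hp).1.pos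
      have h1 : Real.log p ≤ p - 1 := Real.log_le_sub_one_of_pos hp0
      have h2 : 4 < Real.log p - ℓ := hu4 p hp
      rw [div_le_iff₀ hδ] at hℓδ
      rw [div_le_iff₀ hp0]
      nlinarith)
    (by rw [← hL]; exact log_four_le_of_pow_le hδ hℓδ (by linarith) hℓL)
  refine ⟨M, hM0, hMN, hM2, ?_⟩
  have hSM : 0 ≤ ∑ m ∈ M, ∑ n ∈ M, gcdKernel m n :=
    Finset.sum_nonneg fun m _ => Finset.sum_nonneg fun n _ => Real.sqrt_nonneg _
  have hpoly := poly_le_pow_five hL26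
  have hexponent := sqrt_mul_le_of_sum_ge hδ hδ1 hL0.le (by positivity) hS0 hS
  rw [← hβ] at hexponent
  calc N * Real.exp (2 * Real.sqrt 2 * (1 - 11 * δ) * Real.sqrt (L * t / ℓ))
      ≤ N * Real.exp (4 * (1 - δ) * (Real.sqrt β * S)) := by gcongr
    _ ≤ 16 * ((L + 1) * (3 * (4 * L ^ 3) + 1)) * ∑ m ∈ M, ∑ n ∈ M, gcdKernel m n := by
        rw [hL]
        rw [hL] at hM
        exact hM
    _ ≤ _ := by gcongr

lemma eventually_exists_gcd_sum_ge {δ : ℝ} (hδ : 0 < δ) (hδ1 : δ ≤ 1 / 100) :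
    ∀ᶠ N : ℕ in Filter.atTop, ∃ M : Finset ℕ,
      (∀ m ∈ M, 0 < m) ∧ M.card = N ∧ (∀ m ∈ M, ∀ n ∈ M, m ≤ 2 * n) ∧
      N * Real.exp (2 * Real.sqrt 2 * (1 - 11 * δ) * Real.sqrt (Real.log N *
        Real.log (Real.log (Real.log N)) / Real.log (Real.log N))) ≤
        16 * Real.log N ^ 5 * ∑ m ∈ M, ∑ n ∈ M, gcdKernel m n := by
  have hL : Filter.Tendsto (fun N : ℕ => Real.log N) Filter.atTop Filter.atTop :=
    Real.tendsto_log_atTop.comp tendsto_natCast_atTop_atTop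
  have hℓ := Real.tendsto_log_atTop.comp hL
  have ht := Real.tendsto_log_atTop.comp hℓ
  have hlog : ∀ᶠ u : ℝ in Filter.atTop, 2 * Real.log u ≤ δ * u := by
    filter_upwards [(Real.isLittleO_log_id_atTop.bound (show 0 < δ / 2 by positivity)),
      Filter.eventually_ge_atTop 0] with u hu hu0
    rw [Real.norm_eq_abs, id, Real.norm_eq_abs, abs_of_nonneg hu0] at hu
    linarith [le_abs_self (Real.log u)]
  obtain ⟨U, hU⟩ := Filter.eventually_atTop.1 hlog
  filter_upwards [hL.eventually (eventually_le_sum_primesBetween hδ hδ1),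
    hL.eventually (Filter.eventually_ge_atTop 26), hℓ.eventually eventually_pow_five_le_exp,
    hℓ.eventually (Filter.eventually_ge_atTop (4 / δ)),
    ht.eventually (Filter.eventually_ge_atTop (2 + 2 / δ + (1 + Real.log 10) / δ)),
    ht.eventually (Filter.eventually_ge_atTop U), Filter.eventually_gt_atTop 0]
    with N hS hL26 hℓL hℓδ htδ htU hN
  simp only [Function.comp_apply] at hℓL hℓδ htδ htU
  set L := Real.log N with hLdef
  set ℓ := Real.log L with hℓdef
  set t := Real.log ℓ with htdef
  have h10 : 0 < Real.log 10 := Real.log_pos (by norm_num)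
  have h2δ : 0 < 2 / δ := by positivity
  have h1δ : 0 < (1 + Real.log 10) / δ := by positivity
  have ht2 : 2 ≤ t := by linarith
  refine exists_gcd_sum_ge_of_large hδ hδ1 hN hLdef hℓdef htdef hS ht2 ?_ ?_ ?_ hℓδ ?_ hL26
  · nlinarith
  · have h : 1 + Real.log 10 ≤ δ * t := by
      rw [mul_comm, ← div_le_iff₀ hδ]
      linarith
    nlinarith
  · exact fun u hu => hU u (by nlinarith)
  · rwa [hℓdef, Real.exp_log (by linarith)] at hℓL

theorem gcd_sum_lower_bound :
    ∀ ε > (0:ℝ), ∃ N₀ : ℕ, ∀ N : ℕ, N₀ ≤ N →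
      ∃ M : Finset ℕ, (∀ m ∈ M, 0 < m) ∧ M.card = N ∧
        (∀ m ∈ M, ∀ n ∈ M, m ≤ 2 * n) ∧
        Real.exp ((2 * Real.sqrt 2 - ε) *
            Real.sqrt (Real.log N * Real.log (Real.log (Real.log N))
              / Real.log (Real.log N)))
          ≤ (1 / (N : ℝ)) * ∑ m ∈ M, ∑ n ∈ M,
              Real.sqrt ((Nat.gcd m n : ℝ) / (Nat.lcm m n : ℝ)) := by
  intro ε hε
  set δ := min ε 1 / 200 with hδdef
  have hδ : 0 < δ := by positivity
  have hδ1 : δ ≤ 1 / 100 := by linarith [min_le_right ε 1]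
  have hδε : δ ≤ ε / 200 := by linarith [min_le_left ε 1]
  have hL : Filter.Tendsto (fun N : ℕ => Real.log N) Filter.atTop Filter.atTop :=
    Real.tendsto_log_atTop.comp tendsto_natCast_atTop_atTop
  have hℓ := Real.tendsto_log_atTop.comp hL
  refine Filter.eventually_atTop.1 ?_
  filter_upwards [eventually_exists_gcd_sum_ge hδ hδ1, hℓ.eventually eventually_pow_five_le_exp,
    hℓ.eventually (Filter.eventually_ge_atTop (40 / ε + 3)),
    (Real.tendsto_log_atTop.comp hℓ).eventually (Filter.eventually_ge_atTop 1),
    hL.eventually (Filter.eventually_gt_atTop 0), Filter.eventually_gt_atTop 0]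
    with N hM hℓL hℓε ht1 hL0 hN
  simp only [Function.comp_apply] at hℓL hℓε ht1
  obtain ⟨M, hM0, hMN, hM2, hM⟩ := hM
  refine ⟨M, hM0, hMN, hM2, ?_⟩
  set L := Real.log N with hLdef
  set ℓ := Real.log L with hℓdef
  set t := Real.log ℓ with htdef
  set Y := Real.sqrt (L * t / ℓ) with hY
  rw [hℓdef, Real.exp_log hL0, ← hℓdef] at hℓL
  have hN' : (0 : ℝ) < N := by exact_mod_cast hN
  have hε40 : 0 < 40 / ε := by positivity
  have hℓ3 : 3 ≤ ℓ := by linarith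
  have hYℓ : ℓ ^ 2 ≤ Y := by
    refine Real.le_sqrt_of_sq_le ?_
    rw [le_div_iff₀ (by linarith)]
    nlinarith
  have hsqrt2 : Real.sqrt 2 ≤ 3 / 2 := by
    rw [Real.sqrt_le_left (by norm_num)]
    norm_num
  have hεY : 5 * ℓ + Real.log 16 ≤ ε / 2 * Y := by
    have h16 : Real.log 16 ≤ 15 :=
      (Real.log_le_sub_one_of_pos (by norm_num)).trans (by norm_num)
    have h1 : 40 ≤ ε * ℓ := by
      rw [mul_comm, ← div_le_iff₀ hε]
      linarith
    nlinarith
  have hexp : (2 * Real.sqrt 2 - ε) * Y + (5 * ℓ + Real.log 16) ≤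
      2 * Real.sqrt 2 * (1 - 11 * δ) * Y := by
    have hY0 : 0 ≤ Y := Real.sqrt_nonneg _
    have h1 : Real.sqrt 2 * δ ≤ 3 / 2 * (ε / 200) := by gcongr
    nlinarith
  have hfactor : Real.exp (5 * ℓ + Real.log 16) = 16 * L ^ 5 := by
    rw [Real.exp_add, Real.exp_log (by norm_num), mul_comm,
      show 5 * ℓ = ((5 : ℕ) : ℝ) * ℓ by norm_num, Real.exp_nat_mul, hℓdef, Real.exp_log hL0]
  change _ ≤ 1 / (N : ℝ) * ∑ m ∈ M, ∑ n ∈ M, gcdKernel m n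
  rw [one_div_mul_eq_div, le_div_iff₀ hN']
  refine le_of_mul_le_mul_left ?_ (show 0 < 16 * L ^ 5 by positivity)
  refine le_trans ?_ hM
  calc 16 * L ^ 5 * (Real.exp ((2 * Real.sqrt 2 - ε) * Y) * N)
      = N * Real.exp ((2 * Real.sqrt 2 - ε) * Y + (5 * ℓ + Real.log 16)) := by
        rw [Real.exp_add, hfactor]; ring
    _ ≤ _ := by gcongr
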